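/- arXiv:1704.03778 — 14 statements merged into one kernel-verified Lean document; each statement's English description precedes it below -/
import Mathlib

section
/- Let m ≥ 1 be an integer, let d ∈ ℤ, and let w ∈ ℤ^m be a column vector. Set γ = gcd(d, g) where g is the greatest common divisor of the entries of w. Then the quotient abelian group ℤ^m / (dℤ^m + ℤw) is isomorphic to (ℤ/γℤ) ⊕ (ℤ/dℤ)^{m−1}. -/
theorem exists_equiv_single (n : ℕ) (w : Fin (n+1) → ℤ) :
    ∃ (e : (Fin (n+1) → ℤ) ≃ₗ[ℤ] (Fin (n+1) → ℤ)) (c : ℤ), e w = c • Pi.single 0 1 := by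
  obtain ⟨k, bM, bN, f, a, snf⟩ :=
    Submodule.smithNormalForm (Pi.basisFun ℤ (Fin (n+1))) (Submodule.span ℤ {w})
  have hk : k ≤ 1 := by
    have h1 := Module.finrank_eq_card_basis bN
    have h2 := finrank_span_le_card (R := ℤ) ({w} : Set (Fin (n+1) → ℤ))
    simp at h1 h2
    omega
  have key : ∃ (j : Fin (n+1)) (c : ℤ), w = c • bM j := by
    have hr := bN.sum_repr ⟨w, Submodule.mem_span_singleton_self w⟩
    have hr' := congrArg Subtype.val hr
    rcases Nat.le_one_iff_eq_zero_or_eq_one.1 hk with rfl | rfl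
    · refine ⟨0, 0, ?_⟩
      simp at hr'
      simp [← hr']
    · refine ⟨f 0, (bN.repr ⟨w, Submodule.mem_span_singleton_self w⟩ 0) * a 0, ?_⟩
      rw [mul_smul, ← snf]
      simpa using hr'.symm
  obtain ⟨j, c, h⟩ := key
  refine ⟨(bM.reindex (Equiv.swap j 0)).equivFun, c, ?_⟩
  have : bM j = (bM.reindex (Equiv.swap j 0)) 0 := by simp
  rw [h, this, map_smul]
  congr 1
  ext i
  rw [Module.Basis.equivFun_self]
  simp [Pi.single_apply, eq_comm]

/-- Let `m ≥ 1`, `d ∈ ℤ`, and `w ∈ ℤ^m`. With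
`γ = gcd(d, gcd(w))`, the quotient `ℤ^m / (dℤ^m + ℤw)` is isomorphic to
`(ℤ/γℤ) ⊕ (ℤ/dℤ)^{m-1}`. -/
theorem stmt0 (m : ℕ) (hm : 1 ≤ m) (d : ℤ) (w : Fin m → ℤ)
    (γ : ℕ) (hγ : (γ : ℤ) = Int.gcd d (Finset.univ.gcd w)) :
    Nonempty
      (((Fin m → ℤ) ⧸
          Submodule.span ℤ ((Set.range fun y : Fin m → ℤ => d • y) ∪ {w})) ≃+
        (ZMod γ × (Fin (m - 1) → ZMod d.natAbs))) := by
  obtain ⟨n, rfl⟩ : ∃ n, m = n + 1 := ⟨m - 1, by omega⟩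
  change Nonempty (_ ≃+ (ZMod γ × (Fin n → ZMod d.natAbs)))
  obtain ⟨e, c, he⟩ := exists_equiv_single n w
  have hcg : c ∣ Finset.univ.gcd w := by
    refine Finset.dvd_gcd fun i _ => ?_
    have : w = c • e.symm (Pi.single 0 1) := by
      rw [← map_smul, ← he, e.symm_apply_apply]
    rw [this]
    simp
  have hgc : Finset.univ.gcd w ∣ c := by
    have h : ∀ i, ∃ z, w i = Finset.univ.gcd w * z := fun i =>
      Finset.gcd_dvd (Finset.mem_univ i)
    choose z hz using h
    have hw : w = Finset.univ.gcd w • z := by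
      ext i
      simpa using hz i
    have h2 : e w 0 = c := by simp [he]
    have h3 : e w = Finset.univ.gcd w • e z := by
      rw [← map_smul, ← hw]
    rw [← h2, h3]
    simp
  have hγ' : (γ : ℤ) = Int.gcd d c := by
    rw [hγ]
    norm_cast
    exact Nat.dvd_antisymm
      (Int.dvd_gcd (Int.gcd_dvd_left _ _) ((Int.gcd_dvd_right _ _).trans hgc))
      (Int.dvd_gcd (Int.gcd_dvd_left _ _) ((Int.gcd_dvd_right _ _).trans hcg))
  let φ : (Fin (n+1) → ℤ) →+ (ZMod γ × (Fin n → ZMod d.natAbs)) :=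
    { toFun := fun x => ((e x 0 : ℤ), fun i => ((e x i.succ : ℤ) : ZMod d.natAbs))
      map_zero' := by ext <;> simp
      map_add' := fun x y => by ext <;> simp }
  let ψ := φ.toIntLinearMap
  have hψ : ∀ x, ψ x = (((e x 0 : ℤ) : ZMod γ), fun i : Fin n => ((e x i.succ : ℤ) : ZMod d.natAbs)) := fun _ => rfl
  have hsurj : Function.Surjective ψ := by
    rintro ⟨p, q⟩
    obtain ⟨p', rfl⟩ := ZMod.intCast_surjective p
    choose q' hq using fun i => ZMod.intCast_surjective (q i)
    refine ⟨e.symm (Fin.cons p' q'), ?_⟩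
    rw [hψ]
    ext <;> simp [hq]
  have hmem : ∀ x, ψ x = 0 ↔ (γ : ℤ) ∣ e x 0 ∧ ∀ i : Fin n, d ∣ e x i.succ := by
    intro x
    rw [hψ, Prod.ext_iff, funext_iff]
    simp [ZMod.intCast_zmod_eq_zero_iff_dvd, ZMod.intCast_zmod_eq_zero_iff_dvd]
  have hker : Submodule.span ℤ ((Set.range fun y : Fin (n+1) → ℤ => d • y) ∪ {w})
      = LinearMap.ker ψ := by
    apply le_antisymm
    · rw [Submodule.span_le]
      rintro x (⟨y, rfl⟩ | rfl)
      · rw [SetLike.mem_coe, LinearMap.mem_ker, hmem]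
        simp only [map_smul, Pi.smul_apply, smul_eq_mul]
        refine ⟨?_, fun i => dvd_mul_right _ _⟩
        rw [hγ']
        exact (Int.gcd_dvd_left _ _).mul_right _
      · rw [SetLike.mem_coe, LinearMap.mem_ker, hmem, he]
        simp only [Pi.smul_apply, smul_eq_mul]
        refine ⟨?_, fun i => by simp⟩
        rw [hγ']
        exact (Int.gcd_dvd_right _ _).mul_right _
    · intro x hx
      rw [LinearMap.mem_ker, hmem] at hx
      obtain ⟨⟨k, hk⟩, h2⟩ := hx
      choose y hy using h2
      rw [hγ', Int.gcd_eq_gcd_ab] at hk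
      have hx : x = d • e.symm (Fin.cons (Int.gcdA d c * k) y) + (Int.gcdB d c * k) • w := by
        apply e.injective
        rw [map_add, map_smul, map_smul, he, e.apply_symm_apply]
        ext i
        refine Fin.cases ?_ (fun i => ?_) i
        · simp [hk]; ring
        · simp [hy]
      rw [hx]
      refine add_mem (Submodule.subset_span (Or.inl ⟨_, rfl⟩))
        (Submodule.smul_mem _ _ (Submodule.subset_span (Or.inr rfl)))
  rw [hker]
  exact ⟨(ψ.quotKerEquivOfSurjective hsurj).toAddEquiv⟩
end

section
/- Let m > 1 be an integer. Let u ∈ ℤ^m and v ∈ ℤ^m be column vectors such that the first entry of v equals 1. Let γ be the greatest common divisor of the entries of u, set d = vᵀu ∈ ℤ, and let L = d·I_m − u·vᵀ ∈ ℤ^{m×m}. Then the cokernel ℤ^m / (L·ℤ^m) is isomorphic as an abelian group to ℤ ⊕ (ℤ/γℤ) ⊕ (ℤ/dℤ)^{m−2}. -/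
/-- A functional `φ` with `φ a = 1` splits `ℤ^(k+1)` as `ℤ × ℤ^k`. -/
theorem split_aux (k : ℕ) (φ : (Fin (k+1) → ℤ) →ₗ[ℤ] ℤ) (a : Fin (k+1) → ℤ) (ha : φ a = 1) :
    ∃ e : (Fin (k+1) → ℤ) ≃ₗ[ℤ] ℤ × (Fin k → ℤ), (∀ x, (e x).1 = φ x) ∧ e a = (1, 0) := by
  let e1 : (Fin (k+1) → ℤ) ≃ₗ[ℤ] ℤ × LinearMap.ker φ :=
    { toFun := fun x => (φ x, ⟨x - φ x • a, by simp [-zsmul_eq_mul, ha]⟩)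
      map_add' := fun x y => by
        ext1
        · simp
        · apply Subtype.ext
          simp only [map_add, Prod.mk_add_mk, AddMemClass.mk_add_mk, add_smul]
          abel
      map_smul' := fun c x => by
        ext1
        · simp [-zsmul_eq_mul]
        · apply Subtype.ext
          simp [-zsmul_eq_mul, smul_sub, mul_smul]
      invFun := fun p => p.1 • a + p.2
      left_inv := fun x => by simp
      right_inv := fun p => by
        obtain ⟨t, y, hy⟩ := p
        have hy' : φ y = 0 := hy
        ext1
        · simp [-zsmul_eq_mul, ha, hy']
        · apply Subtype.ext
          simp [-zsmul_eq_mul, ha, hy'] }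
  have hr : Module.finrank ℤ (LinearMap.ker φ) = k := by
    have h := e1.finrank_eq
    rw [Module.finrank_prod] at h
    simp at h
    omega
  let b := (Module.finBasisOfFinrankEq ℤ (LinearMap.ker φ) hr).equivFun
  refine ⟨e1.trans ((LinearEquiv.refl ℤ ℤ).prodCongr b), fun x => rfl, ?_⟩
  have : e1 a = (1, 0) := by
    ext1
    · exact ha
    · apply Subtype.ext
      change a - φ a • a = 0
      simp [ha]
  simp [this]

theorem vec_aux (k : ℕ) (w : Fin (k+1) → ℤ) :
    ∃ e : (Fin (k+1) → ℤ) ≃ₗ[ℤ] ℤ × (Fin k → ℤ), ∃ g : ℤ, e w = (g, 0) := by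
  obtain ⟨a, ha, h1⟩ := Finset.extract_gcd (s := Finset.univ) w Finset.univ_nonempty
  obtain ⟨f, hf⟩ := Finset.gcd_eq_sum_mul Finset.univ a
  rw [h1] at hf
  obtain ⟨e, -, he⟩ := split_aux k (∑ i, f i • LinearMap.proj i) a (by
    simp [LinearMap.sum_apply]
    rw [hf]
    first | done | exact Finset.sum_congr rfl fun i _ => mul_comm _ _)
  refine ⟨e, Finset.univ.gcd w, ?_⟩
  have : w = (Finset.univ.gcd w) • a := by
    ext i; simpa using ha i (Finset.mem_univ i)
  rw [this, map_smul, he, ← this]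
  simp

theorem dvd_equiv_aux {M N : Type*} [AddCommGroup M] [AddCommGroup N] (e : M ≃ₗ[ℤ] N) (c : ℤ)
    (x : M) : (∃ y, x = c • y) ↔ ∃ y, e x = c • y := by
  constructor
  · rintro ⟨y, rfl⟩
    exact ⟨e y, by simp⟩
  · rintro ⟨y, h⟩
    exact ⟨e.symm y, e.injective (by simp [h])⟩


/-- Let `m > 1`, `u, v ∈ ℤ^m` with `v₁ = 1`. Let `γ = gcd(u)`,
`d = vᵀu`, and `L = d·I_m − u·vᵀ`. Then the cokernel `ℤ^m / (L·ℤ^m)` is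
isomorphic to `ℤ ⊕ (ℤ/γℤ) ⊕ (ℤ/dℤ)^{m−2}`. -/
theorem stmt1 (m : ℕ) (hm : 1 < m) (u v : Fin m → ℤ)
    (hv1 : v ⟨0, by omega⟩ = 1)
    (γ : ℕ) (hγ : (γ : ℤ) = Finset.univ.gcd u)
    (d : ℤ) (hd : d = ∑ i, v i * u i)
    (L : Matrix (Fin m) (Fin m) ℤ)
    (hL : L = d • (1 : Matrix (Fin m) (Fin m) ℤ) - Matrix.vecMulVec u v) :
    Nonempty
      (((Fin m → ℤ) ⧸ LinearMap.range (Matrix.mulVecLin L)) ≃+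
        (ℤ × ZMod γ × (Fin (m - 2) → ZMod d.natAbs))) := by
  obtain ⟨k, rfl⟩ : ∃ k, m = k + 2 := ⟨m - 2, by omega⟩
  obtain ⟨e0, he0, -⟩ := split_aux (k+1) (∑ i, v i • LinearMap.proj i) (Pi.single 0 1) (by
    simpa [LinearMap.sum_apply, Pi.single_apply] using hv1)
  have he0 : ∀ x, (e0 x).1 = ∑ i, v i * x i := fun x => by
    rw [he0]; simp [LinearMap.sum_apply]
  obtain ⟨e1, g, hg⟩ := vec_aux k (e0 u).2
  let E := e0.trans ((LinearEquiv.refl ℤ ℤ).prodCongr e1)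
  have hE1 : ∀ x, (E x).1 = ∑ i, v i * x i := he0
  have hEu : E u = (d, g, 0) := by
    ext1
    · rw [hE1, hd]
    · exact hg
  have hEL : ∀ x, E (L.mulVec x) = (0, d * (E x).2.1 - (E x).1 * g, d • (E x).2.2) := by
    intro x
    have : L.mulVec x = d • x - (E x).1 • u := by
      rw [hE1, hL, Matrix.sub_mulVec, Matrix.smul_mulVec, Matrix.one_mulVec,
        Matrix.vecMulVec_mulVec]
      ext i
      simp [dotProduct, mul_comm]
    rw [this, map_sub, map_smul, map_smul, hEu]
    ext1
    · simp; ring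
    · ext1 <;> simp
  have hdvd : ∀ c : ℤ, c ∣ γ ↔ c ∣ d ∧ c ∣ g := by
    intro c
    rw [hγ, Finset.dvd_gcd_iff]
    have h1 : (∀ b ∈ Finset.univ, c ∣ u b) ↔ ∃ y, u = c • y := by
      constructor
      · intro h
        choose y hy using fun b => h b (Finset.mem_univ b)
        exact ⟨y, funext hy⟩
      · rintro ⟨y, hy⟩ b -
        exact ⟨y b, by rw [hy]; simp⟩
    rw [h1, dvd_equiv_aux E, hEu]
    constructor
    · rintro ⟨⟨p, q, r⟩, h⟩
      simp only [Prod.smul_mk, Prod.mk.injEq] at h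
      exact ⟨⟨p, h.1⟩, ⟨q, h.2.1⟩⟩
    · rintro ⟨⟨p, hp⟩, ⟨q, hq⟩⟩
      exact ⟨(p, q, 0), by simp [hp, hq]⟩
  let π : (ℤ × ℤ × (Fin k → ℤ)) →+ ℤ × ZMod γ × (Fin k → ZMod d.natAbs) :=
    (AddMonoidHom.id ℤ).prodMap ((Int.castAddHom (ZMod γ)).prodMap
      ((Int.castAddHom (ZMod d.natAbs)).compLeft (Fin k)))
  let F : (Fin (k+2) → ℤ) →ₗ[ℤ] ℤ × ZMod γ × (Fin k → ZMod d.natAbs) :=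
    (π.comp E.toAddEquiv.toAddMonoidHom).toIntLinearMap
  have hF : ∀ x, F x = ((E x).1, ((E x).2.1 : ZMod γ), fun i => ((E x).2.2 i : ZMod d.natAbs)) :=
    fun x => rfl
  have hsurj : Function.Surjective F := by
    rintro ⟨p, q, r⟩
    obtain ⟨q, rfl⟩ := ZMod.intCast_surjective q
    choose r' hr using fun i => ZMod.intCast_surjective (r i)
    refine ⟨E.symm (p, q, r'), ?_⟩
    rw [hF]
    simp [hr]
  have hker : LinearMap.range L.mulVecLin = LinearMap.ker F := by
    ext x
    rw [LinearMap.mem_ker, hF]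
    constructor
    · rintro ⟨x, rfl⟩
      rw [Matrix.mulVecLin_apply, hEL]
      obtain ⟨h1, h2⟩ := (hdvd γ).1 dvd_rfl
      refine Prod.ext rfl (Prod.ext ?_ (funext fun i => ?_))
      · exact (ZMod.intCast_zmod_eq_zero_iff_dvd _ _).2
          (dvd_sub (h1.mul_right _) (h2.mul_left _))
      · refine (ZMod.intCast_zmod_eq_zero_iff_dvd _ _).2 ?_
        simp
    · intro h
      simp only [Prod.mk_eq_zero] at h
      obtain ⟨h1, h2, h3⟩ := h
      have h2 : (γ : ℤ) ∣ (E x).2.1 := (ZMod.intCast_zmod_eq_zero_iff_dvd _ _).1 h2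
      have h2 : (Int.gcd d g : ℤ) ∣ (E x).2.1 :=
        ((hdvd _).2 ⟨Int.gcd_dvd_left .., Int.gcd_dvd_right ..⟩).trans h2
      obtain ⟨q, hq⟩ := h2
      rw [Int.gcd_eq_gcd_ab] at hq
      have h3 : ∀ i, d ∣ (E x).2.2 i := fun i =>
        Int.natAbs_dvd.1 ((ZMod.intCast_zmod_eq_zero_iff_dvd _ _).1 (congrFun h3 i))
      choose z hz using h3
      refine ⟨E.symm (-(d.gcdB g * q), d.gcdA g * q, z), E.injective ?_⟩
      rw [Matrix.mulVecLin_apply, hEL, LinearEquiv.apply_symm_apply]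
      refine Prod.ext h1.symm (Prod.ext ?_ (funext fun i => ?_))
      · simp only [hq]; ring
      · simp [hz]
  exact ⟨((Submodule.quotEquivOfEq _ _ hker).trans
    (F.quotKerEquivOfSurjective hsurj)).toAddEquiv⟩
end

section
/- Let ℓ ≥ 1 be an integer, and let s and p be column vectors in ℤ^{ℓ+1} with last entry s_{ℓ+1} = 1. Set d := sᵀp and assume d ≠ 0. Let γ be the greatest common divisor of the entries of p. Then the matrix L := d·I_{ℓ+1} − p·sᵀ ∈ ℤ^{(ℓ+1)×(ℓ+1)} has cokernel ℤ^{ℓ+1} / (L·ℤ^{ℓ+1}) isomorphic as an abelian group to ℤ ⊕ (ℤ/γℤ) ⊕ (ℤ/dℤ)^{ℓ−1}. -/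
lemma exists_basis_aux (m : ℕ) (q : Fin (m + 1) → ℤ) :
    ∃ (b : Module.Basis (Fin (m + 1)) ℤ (Fin (m + 1) → ℤ)) (c : ℤ), q = c • b 0 := by
  classical
  by_cases hq : q = 0
  · exact ⟨Pi.basisFun ℤ _, 0, by simp [hq]⟩
  obtain ⟨k, ⟨bM, bN, f, a, h⟩⟩ :=
    Submodule.smithNormalForm (Pi.basisFun ℤ (Fin (m + 1))) (Submodule.span ℤ {q})
  have hk : k = 1 := by
    have h1 := Module.finrank_eq_card_basis bN
    rw [← (LinearEquiv.toSpanNonzeroSingleton ℤ _ q hq).finrank_eq, Module.finrank_self] at h1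
    simpa using h1.symm
  subst hk
  have hqm : q ∈ Submodule.span ℤ {q} := Submodule.mem_span_singleton_self q
  have h2 := bN.sum_repr ⟨q, hqm⟩
  have h3 := congrArg Subtype.val h2
  simp [h] at h3
  refine ⟨bM.reindex (Equiv.swap (f 0) 0), bN.repr ⟨q, hqm⟩ 0 * a 0, ?_⟩
  simp only [Module.Basis.reindex_apply, Equiv.symm_swap, Equiv.swap_apply_right]
  rw [mul_smul]
  simpa using h3.symm

/-- Let `ℓ ≥ 1` and `s, p ∈ ℤ^{ℓ+1}` with `s_{ℓ+1} = 1`.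
Set `d := sᵀp ≠ 0` and let `γ = gcd(p)`. Then `L := d·I − p·sᵀ` has cokernel
`ℤ^{ℓ+1} / (L·ℤ^{ℓ+1}) ≅ ℤ ⊕ (ℤ/γℤ) ⊕ (ℤ/dℤ)^{ℓ−1}`. -/
theorem stmt2 (ℓ : ℕ) (hℓ : 1 ≤ ℓ) (s p : Fin (ℓ + 1) → ℤ)
    (hs1 : s (Fin.last ℓ) = 1)
    (d : ℤ) (hd : d = ∑ i, s i * p i) (hd0 : d ≠ 0)
    (γ : ℕ) (hγ : (γ : ℤ) = Finset.univ.gcd p)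
    (L : Matrix (Fin (ℓ + 1)) (Fin (ℓ + 1)) ℤ)
    (hL : L = d • (1 : Matrix (Fin (ℓ + 1)) (Fin (ℓ + 1)) ℤ) - Matrix.vecMulVec p s) :
    Nonempty
      (((Fin (ℓ + 1) → ℤ) ⧸ LinearMap.range (Matrix.mulVecLin L)) ≃+
        (ℤ × ZMod γ × (Fin (ℓ - 1) → ZMod d.natAbs))) := by
  obtain ⟨m, rfl⟩ : ∃ m, ℓ = m + 1 := ⟨ℓ - 1, by omega⟩
  change Nonempty (_ ≃+ (ℤ × ZMod γ × (Fin m → ZMod d.natAbs)))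
  obtain ⟨b, c, hc⟩ := exists_basis_aux m (fun i => p i.castSucc)
  have hγp : ∀ i, (γ : ℤ) ∣ p i := fun i => hγ ▸ Finset.gcd_dvd (Finset.mem_univ i)
  have hγd : (γ : ℤ) ∣ d := hd ▸ Finset.dvd_sum fun i _ => (hγp i).mul_left _
  have hγc : (γ : ℤ) ∣ c := by
    choose r hr using hγp
    have h1 : (fun i : Fin (m + 1) => p i.castSucc) = (γ : ℤ) • fun i => r i.castSucc := by
      ext i; simp [← hr]
    rw [h1] at hc
    have := congrArg (fun v => b.repr v 0) hc
    simp only [map_smul, Finsupp.smul_apply, Module.Basis.repr_self, Finsupp.single_eq_same,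
      smul_eq_mul, mul_one] at this
    exact ⟨_, this.symm⟩
  have hpc : ∀ i : Fin (m + 1), p i.castSucc = c * b 0 i := fun i => by
    simpa using congrFun hc i
  have hgcd : (Int.gcd d c : ℤ) ∣ γ := by
    rw [hγ]
    have hcs : ∀ i : Fin (m + 1), (Int.gcd d c : ℤ) ∣ p i.castSucc := fun i => by
      rw [hpc]; exact (Int.gcd_dvd_right _ _).mul_right _
    refine Finset.dvd_gcd fun i _ => ?_
    refine Fin.lastCases ?_ hcs i
    rw [Fin.sum_univ_castSucc, hs1, one_mul] at hd
    have : p (Fin.last (m + 1)) = d - ∑ i : Fin (m + 1), s i.castSucc * p i.castSucc := by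
      rw [hd]; ring
    rw [this]
    exact dvd_sub (Int.gcd_dvd_left _ _) (Finset.dvd_sum fun i _ => (hcs i).mul_left _)
  obtain ⟨α, β, hαβ⟩ : ∃ α β : ℤ, (γ : ℤ) = d * α + c * β := by
    obtain ⟨t, ht⟩ := hgcd
    refine ⟨Int.gcdA d c * t, Int.gcdB d c * t, ?_⟩
    rw [ht, Int.gcd_eq_gcd_ab]; ring
  have hLz : ∀ z i, L.mulVec z i = d * z i - (∑ j, s j * z j) * p i := by
    intro z i
    rw [hL, Matrix.sub_mulVec, Matrix.smul_mulVec, Matrix.one_mulVec, Matrix.vecMulVec_mulVec]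
    simp [dotProduct, mul_comm]
  have hsL : ∀ z, ∑ i, s i * L.mulVec z i = 0 := by
    intro z
    simp only [hLz, mul_sub, Finset.sum_sub_distrib]
    have h1 : ∑ i, s i * (d * z i) = d * ∑ i, s i * z i := by
      rw [Finset.mul_sum]; exact Finset.sum_congr rfl fun i _ => by ring
    have h2 : ∑ i, s i * ((∑ j, s j * z j) * p i) = (∑ j, s j * z j) * ∑ i, s i * p i := by
      rw [Finset.mul_sum]; exact Finset.sum_congr rfl fun i _ => by ring
    rw [h1, h2, ← hd]; ring
  have hinit : ∀ z, (fun i : Fin (m + 1) => L.mulVec z i.castSucc) =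
      d • (fun i : Fin (m + 1) => z i.castSucc) - ((∑ j, s j * z j) * c) • b 0 := by
    intro z
    ext i
    simp [hLz, hpc]; ring
  let φ : (Fin (m + 1 + 1) → ℤ) →+ (ℤ × ZMod γ × (Fin m → ZMod d.natAbs)) :=
    { toFun := fun x => (∑ i, s i * x i, ((b.repr (fun i => x i.castSucc) 0 : ℤ) : ZMod γ),
        fun k => ((b.repr (fun i => x i.castSucc) k.succ : ℤ) : ZMod d.natAbs))
      map_zero' := by
        have : (fun i : Fin (m + 1) => (0 : Fin (m + 1 + 1) → ℤ) i.castSucc) = 0 := rfl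
        simp only [this]
        ext <;> simp
      map_add' := by
        intro x y
        have : (fun i : Fin (m + 1) => (x + y) i.castSucc) =
          (fun i : Fin (m + 1) => x i.castSucc) + (fun i : Fin (m + 1) => y i.castSucc) := rfl
        simp only [this]
        ext <;> simp [mul_add, Finset.sum_add_distrib] }
  have hφ : ∀ x, φ x = (∑ i, s i * x i, ((b.repr (fun i => x i.castSucc) 0 : ℤ) : ZMod γ),
        fun k => ((b.repr (fun i => x i.castSucc) k.succ : ℤ) : ZMod d.natAbs)) := fun _ => rfl
  -- a vector with prescribed initial part and prescribed pairing with `s`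
  have hlift : ∀ (w : Fin (m + 1) → ℤ) (a : ℤ), ∃ x : Fin (m + 1 + 1) → ℤ,
      b.repr (fun i => x i.castSucc) = Finsupp.equivFunOnFinite.symm w ∧ ∑ i, s i * x i = a := by
    intro w a
    set y := b.repr.symm (Finsupp.equivFunOnFinite.symm w) with hy
    refine ⟨Fin.snoc (α := fun _ => ℤ) y (a - ∑ i : Fin (m + 1), s i.castSucc * y i), ?_, ?_⟩
    · simp [Fin.snoc_castSucc, hy]
    · rw [Fin.sum_univ_castSucc, hs1]; simp
  have hsurj : Function.Surjective φ := by
    rintro ⟨a, u, v⟩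
    obtain ⟨u, rfl⟩ := ZMod.intCast_surjective u
    choose v' hv' using fun k => ZMod.intCast_surjective (v k)
    obtain ⟨x, hx, hx'⟩ := hlift (Fin.cons u v') a
    refine ⟨x, ?_⟩
    rw [hφ, hx, hx']
    simp [hv']
  have hker : (LinearMap.range (Matrix.mulVecLin L)).toAddSubgroup = φ.ker := by
    ext x
    rw [AddMonoidHom.mem_ker, Submodule.mem_toAddSubgroup, LinearMap.mem_range]
    constructor
    · rintro ⟨z, rfl⟩
      rw [hφ, Matrix.mulVecLin_apply, hsL, hinit]
      refine Prod.ext rfl (Prod.ext ?_ (funext fun k => ?_))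
      · simp only [Prod.snd_zero, Prod.fst_zero]
        rw [ZMod.intCast_zmod_eq_zero_iff_dvd]
        simp only [map_sub, map_smul, Finsupp.sub_apply, Finsupp.smul_apply,
          Module.Basis.repr_self, Finsupp.single_eq_same, smul_eq_mul, mul_one]
        exact dvd_sub (hγd.mul_right _) (hγc.mul_left _)
      · simp only [Prod.snd_zero, Pi.zero_apply]
        rw [ZMod.intCast_zmod_eq_zero_iff_dvd]
        simp [-zsmul_eq_mul]
    · intro h
      rw [hφ] at h
      have h1 := congrArg Prod.fst h
      have h2 := congrArg (fun t => t.2.1) h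
      have h3 : ∀ k, _ := fun k => congrArg (fun t => t.2.2 k) h
      simp only [Prod.snd_zero, Prod.fst_zero, Pi.zero_apply,
        ZMod.intCast_zmod_eq_zero_iff_dvd, Int.natCast_natAbs, abs_dvd] at h1 h2 h3
      obtain ⟨t, ht⟩ := h2
      choose r hr using h3
      obtain ⟨z, hz, hz'⟩ := hlift (Fin.cons (α * t) r) (- (β * t))
      have key : (fun i : Fin (m + 1) => L.mulVec z i.castSucc) = fun i => x i.castSucc := by
        apply b.repr.injective
        rw [hinit, hz', map_sub, map_smul, map_smul, hz, Module.Basis.repr_self]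
        ext k
        refine Fin.cases ?_ (fun k => ?_) k
        · simp [ht, hαβ]; ring
        · simp [hr]
      refine ⟨z, ?_⟩
      rw [Matrix.mulVecLin_apply]
      have h4 := hsL z
      rw [Fin.sum_univ_castSucc, hs1] at h1 h4
      have key' := fun i => congrFun key i
      simp only [key'] at h4
      ext i
      refine Fin.lastCases ?_ key' i
      linarith
  exact ⟨(QuotientAddGroup.quotientAddEquivOfEq hker).trans
    (QuotientAddGroup.quotientKerEquivOfSurjective φ hsurj)⟩
end

section
/- Let ℓ ≥ 0 and let L ∈ ℤ^{(ℓ+1)×(ℓ+1)} be a matrix whose rank over ℚ equals ℓ. Suppose s, p ∈ ℤ^{ℓ+1} are column vectors satisfying sᵀL = 0 and Lp = 0, such that some entry of s equals 1. Let γ be the greatest common divisor of the entries of p, set d := sᵀp, and assume d ≠ 0. Write the characteristic polynomial of L as det(X·I_{ℓ+1} − L) = X·q(X) with q ∈ ℤ[X]. Then the torsion subgroup K of the cokernel ℤ^{ℓ+1} / (L·ℤ^{ℓ+1}) is finite and satisfies |d| · #K = γ · |q(0)|. -/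
open Matrix in
lemma aux_ker (ℓ : ℕ) (L : Matrix (Fin (ℓ + 1)) (Fin (ℓ + 1)) ℤ)
    (hrank : (L.map ((↑) : ℤ → ℚ)).rank = ℓ)
    (s p : Fin (ℓ + 1) → ℤ) (hp : L.mulVec p = 0) (hd0 : s ⬝ᵥ p ≠ 0)
    (x : Fin (ℓ + 1) → ℤ) (hx : L.mulVec x = 0) :
    (s ⬝ᵥ p) • x = (s ⬝ᵥ x) • p := by
  set LQ := L.map ((↑) : ℤ → ℚ) with hLQ
  have hc : ∀ y : Fin (ℓ + 1) → ℤ, L.mulVec y = 0 → LQ.mulVec (fun j => (y j : ℚ)) = 0 := by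
    intro y hy
    ext j
    have := congrFun hy j
    simp only [mulVec, dotProduct, Pi.zero_apply, hLQ, map_apply] at this ⊢
    exact_mod_cast this
  have hk : Module.finrank ℚ (LinearMap.ker LQ.mulVecLin) = 1 := by
    have := LinearMap.finrank_range_add_finrank_ker LQ.mulVecLin
    rw [Matrix.rank] at hrank
    simp only [Module.finrank_fintype_fun_eq_card, Fintype.card_fin] at this
    omega
  have hp0 : p ≠ 0 := by
    rintro rfl
    simp at hd0
  let P : LinearMap.ker LQ.mulVecLin := ⟨fun j => (p j : ℚ), by simpa using hc p hp⟩
  let X : LinearMap.ker LQ.mulVecLin := ⟨fun j => (x j : ℚ), by simpa using hc x hx⟩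
  have hP : P ≠ 0 := by
    intro h
    apply hp0
    ext j
    have := congrFun (congrArg Subtype.val h) j
    simpa [P] using this
  obtain ⟨c, hcX⟩ := (finrank_eq_one_iff_of_nonzero' P hP).1 hk X
  have hcx : ∀ j, c * (p j : ℚ) = x j := fun j => by
    have := congrFun (congrArg Subtype.val hcX) j
    simpa [P, X] using this
  ext j
  have h2 : ((s ⬝ᵥ p : ℤ) : ℚ) * c = ((s ⬝ᵥ x : ℤ) : ℚ) := by
    simp only [dotProduct, Int.cast_sum, Int.cast_mul, Finset.sum_mul]
    refine Finset.sum_congr rfl fun k _ => ?_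
    rw [← hcx k]; ring
  simp only [Pi.smul_apply, smul_eq_mul]
  have : (((s ⬝ᵥ p) * x j : ℤ) : ℚ) = (((s ⬝ᵥ x) * p j : ℤ) : ℚ) := by
    rw [Int.cast_mul, Int.cast_mul, ← h2, ← hcx j]; ring
  exact_mod_cast this

open Matrix in
lemma aux_adj (ℓ : ℕ) (L : Matrix (Fin (ℓ + 1)) (Fin (ℓ + 1)) ℤ)
    (s : Fin (ℓ + 1) → ℤ) (hs : Matrix.vecMul s L = 0)
    (q : Polynomial ℤ) (hq : L.charpoly = Polynomial.X * q) :
    s ᵥ* (-L).adjugate = (q.eval 0) • s := by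
  let S : Fin (ℓ + 1) → Polynomial ℤ := fun j => Polynomial.C (s j)
  have h1 : S ᵥ* L.charmatrix = (Polynomial.X : Polynomial ℤ) • S := by
    rw [charmatrix, vecMul_sub]
    have : S ᵥ* (Polynomial.C.mapMatrix L) = 0 := by
      ext1 j
      have := congrArg Polynomial.C (congrFun hs j)
      simpa [vecMul, dotProduct, S] using this
    rw [this, sub_zero]
    ext1 j
    simp [vecMul_diagonal, mul_comm]
  have h2 : S ᵥ* L.charmatrix.adjugate = q • S := by
    have h3 : (Polynomial.X : Polynomial ℤ) • (S ᵥ* L.charmatrix.adjugate)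
        = (Polynomial.X : Polynomial ℤ) • (q • S) := by
      rw [← smul_vecMul, ← h1, vecMul_vecMul, mul_adjugate, smul_smul, ← hq, charpoly,
        vecMul_smul, vecMul_one]
    ext1 j
    have := congrFun h3 j
    simp only [Pi.smul_apply, smul_eq_mul] at this ⊢
    exact mul_left_cancel₀ Polynomial.X_ne_zero this
  have h4 : (Polynomial.evalRingHom (0 : ℤ)).mapMatrix L.charmatrix = -L := by
    ext a b
    by_cases hab : a = b
    · subst hab; simp
    · simp [charmatrix_apply_ne _ _ _ hab]
  rw [← h4, ← RingHom.map_adjugate]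
  ext j
  have := congrArg (Polynomial.eval 0) (congrFun h2 j)
  simpa [vecMul, dotProduct, S, Polynomial.eval_finsetSum] using this

open Matrix in
lemma aux_card (n : ℕ) (A : Matrix (Fin n) (Fin n) ℤ) (hA : A.det ≠ 0) :
    Nat.card ((Fin n → ℤ) ⧸ LinearMap.range A.mulVecLin) = A.det.natAbs := by
  have hinj : Function.Injective A.mulVecLin := by
    rw [← LinearMap.ker_eq_bot, LinearMap.ker_eq_bot']
    intro v hv
    by_contra h0
    exact hA (exists_mulVec_eq_zero_iff.1 ⟨v, h0, by simpa using hv⟩)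
  rw [← Submodule.natAbs_det_equiv _ (LinearEquiv.ofInjective A.mulVecLin hinj)]
  congr 1
  rw [← LinearMap.det_toLin' A]
  congr 1

open Matrix in
/-- matrix form of Lorenzini's formula / Theorem 1.2.
Let `L ∈ ℤ^{(ℓ+1)×(ℓ+1)}` have rank `ℓ` over `ℚ`, with `sᵀL = 0`, `Lp = 0`,
some entry of `s` equal to `1`, `γ = gcd(p)`, `d = sᵀp ≠ 0`, and characteristic
polynomial `X·q(X)`. Then the torsion subgroup `K` of `ℤ^{ℓ+1}/(L·ℤ^{ℓ+1})` is
finite, and `|d| · #K = γ · |q(0)|`. -/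
theorem stmt3 (ℓ : ℕ) (L : Matrix (Fin (ℓ + 1)) (Fin (ℓ + 1)) ℤ)
    (hrank : (L.map ((↑) : ℤ → ℚ)).rank = ℓ)
    (s p : Fin (ℓ + 1) → ℤ)
    (hs : Matrix.vecMul s L = 0) (hp : L.mulVec p = 0)
    (hs1 : ∃ i, s i = 1)
    (γ : ℕ) (hγ : (γ : ℤ) = Finset.univ.gcd p)
    (d : ℤ) (hd : d = ∑ i, s i * p i) (hd0 : d ≠ 0)
    (q : Polynomial ℤ) (hq : L.charpoly = Polynomial.X * q) :
    Finite
      (Submodule.torsion ℤ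
        ((Fin (ℓ + 1) → ℤ) ⧸ LinearMap.range (Matrix.mulVecLin L))) ∧
    d.natAbs *
        Nat.card
          (Submodule.torsion ℤ
            ((Fin (ℓ + 1) → ℤ) ⧸ LinearMap.range (Matrix.mulVecLin L))) =
      γ * (q.eval 0).natAbs := by
  classical
  obtain ⟨i, hi⟩ := hs1
  have hdd : d = s ⬝ᵥ p := hd
  have hker := aux_ker ℓ L hrank s p hp (hdd ▸ hd0)
  rw [← hdd] at hker
  have hadj := aux_adj ℓ L s hs q hq
  have hp0 : p ≠ 0 := by
    rintro rfl
    simp at hd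
    exact hd0 hd
  have hγ0 : (γ : ℤ) ≠ 0 := by
    rw [hγ, Finset.gcd_ne_zero_iff]
    obtain ⟨j, hj⟩ := Function.ne_iff.1 hp0
    exact ⟨j, Finset.mem_univ _, hj⟩
  obtain ⟨u, hu⟩ := Finset.gcd_eq_sum_mul Finset.univ p
  have hup : u ⬝ᵥ p = γ := by
    rw [hγ, hu, dotProduct]
    exact Finset.sum_congr rfl fun _ _ => mul_comm _ _
  have hdvd : ∀ j, ∃ c, p j = γ * c := fun j => by
    rw [hγ]; exact Finset.gcd_dvd (Finset.mem_univ j)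
  choose p' hp' using hdvd
  have hpp : p = (γ : ℤ) • p' := by ext j; simp [hp' j]
  have hup' : u ⬝ᵥ p' = 1 := by
    rw [hpp, dotProduct_smul, smul_eq_mul] at hup
    exact mul_left_cancel₀ hγ0 (by rw [hup, mul_one])
  have hLp' : L *ᵥ p' = 0 := by
    rw [hpp, mulVec_smul] at hp
    exact (smul_eq_zero.1 hp).resolve_left hγ0
  set e : Fin (ℓ + 1) → ℤ := Pi.single i 1 with he
  have hse : s ⬝ᵥ e = 1 := by simp [he, hi]
  have hsL : ∀ x, s ⬝ᵥ (L *ᵥ x) = 0 := fun x => by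
    rw [dotProduct_mulVec, hs, zero_dotProduct]
  set A : Matrix (Fin (ℓ + 1)) (Fin (ℓ + 1)) ℤ := (-L).updateRow i ((-L) i + u) with hA
  have hAx : ∀ x, A *ᵥ x = (u ⬝ᵥ x) • e - L *ᵥ x := by
    intro x
    ext j
    by_cases hj : j = i
    · subst hj
      simp only [hA, mulVec, he, dotProduct, updateRow_self, Pi.add_apply, neg_apply, Pi.sub_apply,
        Pi.smul_apply, Pi.single_eq_same, smul_eq_mul, mul_one, ← Finset.sum_sub_distrib]
      exact Finset.sum_congr rfl fun k _ => by ring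
    · simp [hA, mulVec, he, hj, updateRow_ne, dotProduct]
  have hsA : ∀ x, s ⬝ᵥ (A *ᵥ x) = u ⬝ᵥ x := fun x => by
    rw [hAx, dotProduct_sub, dotProduct_smul, hse, hsL]; simp
  have hdetL : (-L).det = 0 := by
    exact exists_mulVec_eq_zero_iff.1 ⟨p, hp0, by rw [neg_mulVec, hp, neg_zero]⟩
  -- determinant of A
  have hdetA : d * A.det = γ * q.eval 0 := by
    have h1 : A.det = ∑ j, u j * (-L).adjugate j i := by
      rw [hA, det_updateRow_add, updateRow_eq_self, hdetL, zero_add, ← cramer_transpose_apply,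
        cramer_eq_adjugate_mulVec, ← adjugate_transpose]
      simp [mulVec, dotProduct, mul_comm]
    have h2 : ∀ j, d * (-L).adjugate j i = q.eval 0 * p j := by
      intro j
      have h3 : L *ᵥ (fun j => (-L).adjugate j i) = 0 := by
        have h4 := mul_adjugate (-L)
        rw [hdetL, zero_smul, neg_mul, neg_eq_zero] at h4
        ext k
        have := congrFun (congrFun h4 k) i
        simpa [mul_apply, mulVec, dotProduct] using this
      have h5 := congrFun (hker _ h3) j
      have h6 := congrFun hadj i
      simp only [vecMul, Pi.smul_apply, smul_eq_mul, hi, mul_one] at h5 h6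
      rw [h5]
      congr 1
    rw [h1, Finset.mul_sum, ← hup, dotProduct, Finset.sum_mul]
    refine Finset.sum_congr rfl fun j _ => ?_
    linear_combination u j * h2 j
  have hAne : A.det ≠ 0 := by
    intro h0
    obtain ⟨v, hv0, hv⟩ := exists_mulVec_eq_zero_iff.2 h0
    have h1 : u ⬝ᵥ v = 0 := by rw [← hsA, hv, dotProduct_zero]
    have h2 : L *ᵥ v = 0 := by
      have := hAx v
      rw [hv, h1, zero_smul, zero_sub] at this
      exact neg_eq_zero.1 this.symm
    have h3 := hker v h2
    have h4 := congrArg (u ⬝ᵥ ·) h3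
    simp only [dotProduct_smul, h1, hup, smul_eq_mul, mul_zero] at h4
    have h5 : s ⬝ᵥ v = 0 := (mul_eq_zero.1 h4.symm).resolve_right hγ0
    rw [h5, zero_smul] at h3
    exact hv0 ((smul_eq_zero.1 h3).resolve_left hd0)
  have hcard := aux_card _ A hAne
  -- comparison
  have hle : LinearMap.range (mulVecLin L) ≤ LinearMap.range (mulVecLin A) := by
    rintro _ ⟨x, rfl⟩
    refine ⟨(u ⬝ᵥ x) • p' - x, ?_⟩
    simp only [mulVecLin_apply]
    rw [hAx, dotProduct_sub, dotProduct_smul, hup', mulVec_sub, mulVec_smul, hLp']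
    simp
  let f := Submodule.factor hle
  let g := f ∘ₗ (Submodule.torsion ℤ
        ((Fin (ℓ + 1) → ℤ) ⧸ LinearMap.range (Matrix.mulVecLin L))).subtype
  have htors : ∀ x : Fin (ℓ + 1) → ℤ,
      (Submodule.Quotient.mk x : (Fin (ℓ + 1) → ℤ) ⧸ LinearMap.range (Matrix.mulVecLin L)) ∈
        Submodule.torsion ℤ ((Fin (ℓ + 1) → ℤ) ⧸ LinearMap.range (Matrix.mulVecLin L)) ↔
      s ⬝ᵥ x = 0 := by
    intro x
    rw [Submodule.mem_torsion_iff]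
    constructor
    · rintro ⟨a, ha⟩
      rw [Submonoid.smul_def, ← Submodule.Quotient.mk_smul, Submodule.Quotient.mk_eq_zero] at ha
      obtain ⟨y, hy⟩ := ha
      have := hsL y
      rw [mulVecLin_apply] at hy
      rw [hy, dotProduct_smul, smul_eq_mul] at this
      exact (mul_eq_zero.1 this).resolve_left (nonZeroDivisors.ne_zero a.2)
    · intro hx
      refine ⟨⟨A.det, mem_nonZeroDivisors_of_ne_zero hAne⟩, ?_⟩
      rw [Submonoid.smul_def, ← Submodule.Quotient.mk_smul, Submodule.Quotient.mk_eq_zero]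
      have h1 : A *ᵥ (A.adjugate *ᵥ x) = A.det • x := by
        rw [mulVec_mulVec, mul_adjugate, smul_mulVec, one_mulVec]
      have h2 : u ⬝ᵥ (A.adjugate *ᵥ x) = 0 := by
        rw [← hsA, h1, dotProduct_smul, hx, smul_zero]
      refine ⟨-(A.adjugate *ᵥ x), ?_⟩
      rw [mulVecLin_apply, mulVec_neg, ← h1, hAx, h2]
      simp
  have hbij : Function.Bijective g := by
    constructor
    · rw [← LinearMap.ker_eq_bot, LinearMap.ker_eq_bot']
      rintro ⟨m, hm⟩ h
      obtain ⟨x, rfl⟩ := Submodule.Quotient.mk_surjective _ m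
      rw [htors] at hm
      have h' : (Submodule.Quotient.mk x : (Fin (ℓ + 1) → ℤ) ⧸ LinearMap.range (mulVecLin A)) = 0 := h
      rw [Submodule.Quotient.mk_eq_zero] at h'
      obtain ⟨y, hy⟩ := h'
      rw [mulVecLin_apply] at hy
      have h1 : u ⬝ᵥ y = 0 := by rw [← hsA, hy, hm]
      apply Subtype.ext
      change Submodule.Quotient.mk x = _
      refine (Submodule.Quotient.mk_eq_zero _).2 ⟨-y, ?_⟩
      rw [mulVecLin_apply, mulVec_neg, ← hy, hAx, h1]
      simp
    · intro m
      obtain ⟨x, rfl⟩ := Submodule.Quotient.mk_surjective _ m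
      refine ⟨⟨Submodule.Quotient.mk (x - (s ⬝ᵥ x) • e), ?_⟩, ?_⟩
      · rw [htors, dotProduct_sub, dotProduct_smul, hse]; simp
      · change Submodule.Quotient.mk (x - (s ⬝ᵥ x) • e) = Submodule.Quotient.mk x
        rw [Submodule.Quotient.eq]
        refine ⟨-((s ⬝ᵥ x) • p'), ?_⟩
        rw [mulVecLin_apply, mulVec_neg, mulVec_smul, hAx, hup', hLp']
        simp
  have hc2 := Nat.card_eq_of_bijective g hbij
  rw [hcard] at hc2
  refine ⟨Nat.finite_of_card_ne_zero (by rw [hc2]; exact Int.natAbs_ne_zero.2 hAne), ?_⟩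
  rw [hc2, ← Int.natAbs_mul, hdetA, Int.natAbs_mul, Int.natAbs_natCast]
end

section
/- Let m ≥ 1, let M ∈ ℝ^{m×m} be a matrix with all entries nonnegative, let λ ∈ ℝ, and set L = λ·I_m − M. Suppose u, v ∈ ℝ^m are column vectors with all entries strictly positive satisfying uᵀL = 0 and Lv = 0. Suppose further that there is a nonempty proper subset J of {1,2,…,m} such that M_{i,j} = 0 for all i ∉ J and j ∈ J. Then the kernel of L (as a linear map ℝ^m → ℝ^m) has dimension at least 2. -/
/-- Lemma 6.2 of the paper. Let `M ∈ ℝ^{m×m}` be nonnegative,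
`L = λ·I − M`, and suppose `u, v > 0` satisfy `uᵀL = 0` and `Lv = 0`.
If there is a nonempty proper subset `J ⊆ {1,…,m}` with `M_{i,j} = 0` for all
`i ∉ J`, `j ∈ J`, then the kernel of `L` has dimension at least `2`. -/
theorem stmt4 (m : ℕ) (hm : 1 ≤ m) (M : Matrix (Fin m) (Fin m) ℝ)
    (hM : ∀ i j, 0 ≤ M i j) (lam : ℝ)
    (L : Matrix (Fin m) (Fin m) ℝ)
    (hL : L = lam • (1 : Matrix (Fin m) (Fin m) ℝ) - M)
    (u v : Fin m → ℝ) (hu : ∀ i, 0 < u i) (hv : ∀ i, 0 < v i)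
    (huL : Matrix.vecMul u L = 0) (hLv : L.mulVec v = 0)
    (J : Finset (Fin m)) (hJne : J.Nonempty) (hJprop : J ≠ Finset.univ)
    (hJ : ∀ i ∉ J, ∀ j ∈ J, M i j = 0) :
    2 ≤ Module.finrank ℝ (LinearMap.ker (Matrix.mulVecLin L)) := by
  classical
  have hLx : ∀ (x : Fin m → ℝ) (i : Fin m),
      L.mulVec x i = lam * x i - ∑ j, M i j * x j := by
    intro x i
    rw [hL, Matrix.sub_mulVec, Matrix.smul_mulVec, Matrix.one_mulVec]
    simp [Matrix.mulVec, dotProduct]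
  let w : Fin m → ℝ := fun j => if j ∈ J then v j else 0
  have hw : ∀ j, w j = if j ∈ J then v j else 0 := fun _ => rfl
  have hnn : ∀ i, 0 ≤ L.mulVec w i := by
    intro i
    by_cases hi : i ∈ J
    · have h1 : L.mulVec v i = 0 := by rw [hLv]; rfl
      rw [hLx] at h1 ⊢
      have h2 : ∑ j, M i j * w j ≤ ∑ j, M i j * v j := by
        apply Finset.sum_le_sum
        intro j _
        apply mul_le_mul_of_nonneg_left _ (hM i j)
        rw [hw]
        split_ifs
        · exact le_rfl
        · exact (hv j).le
      have h3 : w i = v i := by rw [hw, if_pos hi]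
      rw [h3]
      linarith
    · rw [hLx]
      have h2 : ∑ j, M i j * w j = 0 := by
        apply Finset.sum_eq_zero
        intro j _
        by_cases hj : j ∈ J
        · rw [hJ i hi j hj, zero_mul]
        · rw [hw, if_neg hj, mul_zero]
      rw [h2, hw, if_neg hi]
      simp
  have hdot : ∑ i, u i * L.mulVec w i = 0 := by
    have h := Matrix.dotProduct_mulVec u L w
    rw [huL, zero_dotProduct] at h
    exact h
  have hLw : L.mulVec w = 0 := by
    funext i
    have h := (Finset.sum_eq_zero_iff_of_nonneg
      (fun i _ => mul_nonneg (hu i).le (hnn i))).1 hdot i (Finset.mem_univ i)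
    exact (mul_eq_zero.1 h).resolve_left (hu i).ne'
  obtain ⟨a, ha⟩ := hJne
  obtain ⟨b, hb⟩ : ∃ b, b ∉ J := by
    by_contra! h
    exact hJprop (Finset.eq_univ_iff_forall.2 h)
  let V : LinearMap.ker (Matrix.mulVecLin L) := ⟨v, by simpa using hLv⟩
  let W : LinearMap.ker (Matrix.mulVecLin L) := ⟨w, by simpa using hLw⟩
  have hli : LinearIndependent ℝ ![V, W] := by
    rw [LinearIndependent.pair_iff]
    intro s t hst
    have h0 : s • v + t • w = 0 := congrArg Subtype.val hst
    have hb' := congrFun h0 b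
    have ha' := congrFun h0 a
    simp only [Pi.add_apply, Pi.smul_apply, smul_eq_mul, Pi.zero_apply, hw, if_neg hb,
      if_pos ha, mul_zero, add_zero] at ha' hb'
    have hs : s = 0 := (mul_eq_zero.1 hb').resolve_right (hv b).ne'
    rw [hs, zero_mul, zero_add] at ha'
    exact ⟨hs, (mul_eq_zero.1 ha').resolve_right (hv a).ne'⟩
  simpa using hli.fintype_card_le_finrank
end

section
/- Let ℓ ≥ 1, let M ∈ ℝ^{(ℓ+1)×(ℓ+1)} be a matrix with all entries nonnegative, let λ ∈ ℝ, and let x ∈ ℝ^{ℓ+1} be a column vector with all entries strictly positive such that Mx = λx. Let t be a positive integer and set \overline{y} := Σ_{k=0}^{t−1} \overline{M}^k·\overline{x} ∈ ℝ^ℓ. Then \overline{y} has all entries strictly positive; and if every entry of the last column of the matrix Σ_{k=0}^{t−1} M^k is strictly positive, then \overline{M}·\overline{y} < λ·\overline{y} entrywise. -/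
theorem aux_nonneg {n : ℕ} (A : Matrix (Fin n) (Fin n) ℝ) (hA : ∀ i j, 0 ≤ A i j)
    (v : Fin n → ℝ) (hv : ∀ i, 0 ≤ v i) (k : ℕ) : ∀ i, 0 ≤ (A ^ k).mulVec v i := by
  induction k with
  | zero => intro i; simpa using hv i
  | succ k ih =>
    intro i
    rw [pow_succ', ← Matrix.mulVec_mulVec]
    rw [Matrix.mulVec, dotProduct]
    refine Finset.sum_nonneg fun j _ => ?_
    exact mul_nonneg (hA i j) (ih j)

theorem aux_path {l : ℕ} (M : Matrix (Fin (l + 1)) (Fin (l + 1)) ℝ)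
    (hM : ∀ i j, 0 ≤ M i j) (k : ℕ) : ∀ i : Fin l, 0 < (M ^ k) i.castSucc (Fin.last l) →
      ∃ j < k, 0 < ((M.submatrix Fin.castSucc Fin.castSucc) ^ j).mulVec
        (fun m => M m.castSucc (Fin.last l)) i := by
  induction k with
  | zero =>
    intro i h
    rw [pow_zero, Matrix.one_apply_ne (Fin.castSucc_lt_last i).ne] at h
    exact absurd h (lt_irrefl _)
  | succ k ih =>
    intro i h
    rw [pow_succ', Matrix.mul_apply] at h
    obtain ⟨m, -, hm⟩ := Finset.exists_lt_of_sum_lt (s := Finset.univ) (f := fun _ => (0 : ℝ))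
      (g := fun m => M i.castSucc m * (M ^ k) m (Fin.last l)) (by simpa using h)
    have h1 : 0 < M i.castSucc m := by
      rcases (hM i.castSucc m).lt_or_eq with h | h
      · exact h
      · simp [← h] at hm
    have h2 : 0 < (M ^ k) m (Fin.last l) := (mul_pos_iff_of_pos_left h1).1 hm
    induction m using Fin.lastCases with
    | last => exact ⟨0, Nat.succ_pos _, by simpa using h1⟩
    | cast m =>
      obtain ⟨j, hj, hp⟩ := ih m h2
      refine ⟨j + 1, by omega, ?_⟩
      rw [pow_succ', ← Matrix.mulVec_mulVec]
      refine Finset.sum_pos' (fun a _ => mul_nonneg (hM _ _) ?_)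
        ⟨m, Finset.mem_univ _, mul_pos h1 hp⟩
      exact aux_nonneg _ (fun _ _ => hM _ _) _ (fun _ => hM _ _) j a

/-- Proposition 6.6(iii) of the paper. Let `M ∈ ℝ^{(ℓ+1)×(ℓ+1)}`
be nonnegative, `x > 0` with `Mx = λx`, and let `t > 0`. Set
`\overline{y} := Σ_{k=0}^{t−1} \overline{M}^k·\overline{x}`. Then `\overline{y} > 0`;
and if every entry of the last column of `Σ_{k=0}^{t−1} M^k` is strictly positive,
then `\overline{M}·\overline{y} < λ·\overline{y}` entrywise. -/
theorem stmt8 (ℓ : ℕ) (hℓ : 1 ≤ ℓ) (M : Matrix (Fin (ℓ + 1)) (Fin (ℓ + 1)) ℝ)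
    (hM : ∀ i j, 0 ≤ M i j) (lam : ℝ) (x : Fin (ℓ + 1) → ℝ)
    (hx : ∀ i, 0 < x i) (hMx : M.mulVec x = lam • x)
    (t : ℕ) (ht : 0 < t)
    (y : Fin ℓ → ℝ)
    (hy : y = ∑ k ∈ Finset.range t,
        ((M.submatrix Fin.castSucc Fin.castSucc) ^ k).mulVec (fun j => x j.castSucc)) :
    (∀ i, 0 < y i) ∧
      ((∀ i, 0 < (∑ k ∈ Finset.range t, M ^ k) i (Fin.last ℓ)) →
        ∀ i : Fin ℓ,
          (M.submatrix Fin.castSucc Fin.castSucc).mulVec y i < lam * y i) := by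
  have hA : ∀ i j, 0 ≤ (M.submatrix Fin.castSucc Fin.castSucc) i j := fun _ _ => hM _ _
  constructor
  · intro i
    rw [hy, Finset.sum_apply]
    refine Finset.sum_pos' (fun k _ => aux_nonneg _ hA _ (fun j => (hx _).le) k i)
      ⟨0, Finset.mem_range.2 ht, by simpa using hx _⟩
  · intro h i
    set A := M.submatrix Fin.castSucc Fin.castSucc with hAdef
    set b : Fin ℓ → ℝ := fun m => M m.castSucc (Fin.last ℓ) with hb
    set z : Fin ℓ → ℝ := fun j => x j.castSucc with hz
    have e0 : A.mulVec z = lam • z - x (Fin.last ℓ) • b := by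
      funext j
      have := congrFun hMx j.castSucc
      simp only [Matrix.mulVec, dotProduct, Fin.sum_univ_castSucc, Pi.smul_apply,
        smul_eq_mul] at this
      simp only [Matrix.mulVec, dotProduct, Pi.smul_apply, Pi.sub_apply, smul_eq_mul, hz, hb,
        hAdef, Matrix.submatrix_apply]
      linarith
    have e1 : A.mulVec y = lam • y - x (Fin.last ℓ) • ∑ k ∈ Finset.range t, (A ^ k).mulVec b := by
      rw [hy, Matrix.mulVec_sum, Finset.smul_sum, Finset.smul_sum, ← Finset.sum_sub_distrib]
      refine Finset.sum_congr rfl fun k _ => ?_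
      rw [Matrix.mulVec_mulVec, ← pow_succ', pow_succ, ← Matrix.mulVec_mulVec, e0,
        Matrix.mulVec_sub, Matrix.mulVec_smul, Matrix.mulVec_smul]
    have hpos : 0 < (∑ k ∈ Finset.range t, (A ^ k).mulVec b) i := by
      have hi := h i.castSucc
      rw [Matrix.sum_apply] at hi
      obtain ⟨k, hk, hkp⟩ := Finset.exists_lt_of_sum_lt (s := Finset.range t)
        (f := fun _ => (0 : ℝ)) (g := fun k => (M ^ k) i.castSucc (Fin.last ℓ)) (by simpa using hi)
      obtain ⟨j, hj, hp⟩ := aux_path M hM k i hkp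
      rw [Finset.sum_apply]
      exact Finset.sum_pos' (fun k _ => aux_nonneg _ hA _ (fun j => hM _ _) k i)
        ⟨j, Finset.mem_range.2 (hj.trans (Finset.mem_range.1 hk)), hp⟩
    rw [e1]
    simp only [Pi.sub_apply, Pi.smul_apply, smul_eq_mul]
    have := mul_pos (hx (Fin.last ℓ)) hpos
    linarith
end

section
/- Let F be a field and let A be a finite-dimensional Hopf algebra over F. Then for every finite-dimensional (left) A-module V, the F-vector space Hom_A(V, A) of A-module homomorphisms from V to the left regular A-module A has dimension dim_F Hom_A(V, A) = dim_F V. -/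
open scoped TensorProduct Coalgebra in
/-- `b ⊗ c ↦ φ c • b`. -/
noncomputable def evR {F A : Type*} [Field F] [Ring A] [Algebra F A] (φ : A →ₗ[F] F) :
    A ⊗[F] A →ₗ[F] A :=
  (TensorProduct.rid F A).toLinearMap ∘ₗ LinearMap.lTensor A φ

open scoped TensorProduct Coalgebra in
lemma evR_tmul {F A : Type*} [Field F] [Ring A] [Algebra F A] (φ : A →ₗ[F] F) (b c : A) :
    evR φ (b ⊗ₜ[F] c) = φ c • b := by
  simp [evR]

open scoped TensorProduct Coalgebra in
lemma evR_mul {F A : Type*} [Field F] [Ring A] [Algebra F A] (φ : A →ₗ[F] F) (c : A)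
    (z : A ⊗[F] A) :
    evR φ ((c ⊗ₜ[F] 1) * z) = c * evR φ z := by
  induction z with
  | zero => simp
  | add x y hx hy => rw [mul_add, map_add, map_add, hx, hy, mul_add]
  | tmul x y => simp [evR_tmul]

open scoped TensorProduct Coalgebra in
lemma evR_mul' {F A : Type*} [Field F] [Ring A] [Algebra F A] (φ : A →ₗ[F] F) (c : A)
    (z : A ⊗[F] A) :
    evR φ ((1 ⊗ₜ[F] c) * z) = evR (φ ∘ₗ LinearMap.mulLeft F c) z := by
  induction z with
  | zero => simp
  | add x y hx hy => rw [mul_add, map_add, map_add, hx, hy]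
  | tmul x y => simp [evR_tmul]

open scoped TensorProduct Coalgebra in
open Coalgebra HopfAlgebra in
lemma galois_one {F A : Type*} [Field F] [Ring A] [HopfAlgebra F A] (x : A) :
    ∑ i ∈ (ℛ F x).index, ((antipode F ((ℛ F x).left i)) ⊗ₜ[F] (1 : A)) *
      comul (R := F) ((ℛ F x).right i) = 1 ⊗ₜ[F] x := by
  have h := sum_tmul_tmul_eq (ℛ F x) (fun i => ℛ F ((ℛ F x).left i))
    (fun i => ℛ F ((ℛ F x).right i))
  have h2 := congrArg (fun z => (LinearMap.rTensor A
    (LinearMap.mul' F A ∘ₗ (antipode F).rTensor A)) ((TensorProduct.assoc F A A A).symm z)) h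
  simp only [map_sum, TensorProduct.assoc_symm_tmul, LinearMap.rTensor_tmul,
    LinearMap.comp_apply, LinearMap.mul'_apply] at h2
  simp_rw [← TensorProduct.sum_tmul, sum_antipode_mul_eq_smul] at h2
  have h3 := congrArg (fun z => (LinearMap.rTensor A (Algebra.linearMap F A)) z)
    (sum_counit_tmul_eq (ℛ F x))
  simp only [map_sum, LinearMap.rTensor_tmul, Algebra.linearMap_apply, map_one,
    Algebra.algebraMap_eq_smul_one] at h3
  rw [← h3, h2]
  refine Finset.sum_congr rfl fun i _ => ?_
  rw [← (ℛ F ((ℛ F x).right i)).eq, Finset.mul_sum]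
  simp only [Algebra.TensorProduct.tmul_mul_tmul, one_mul]

open scoped TensorProduct Coalgebra in
open Coalgebra HopfAlgebra in
lemma galois_two {F A : Type*} [Field F] [Ring A] [HopfAlgebra F A] (φ : A →ₗ[F] F) (x a : A) :
    ∑ i ∈ (ℛ F a).index, ∑ j ∈ (ℛ F ((ℛ F a).left i)).index,
      φ (x * antipode F ((ℛ F ((ℛ F a).left i)).right j) * (ℛ F a).right i) •
        (ℛ F ((ℛ F a).left i)).left j = φ x • a := by
  have h := sum_tmul_tmul_eq (ℛ F a) (fun i => ℛ F ((ℛ F a).left i))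
    (fun i => ℛ F ((ℛ F a).right i))
  have h2 := congrArg (fun z => evR (φ ∘ₗ LinearMap.mulLeft F x) ((LinearMap.lTensor A
    (LinearMap.mul' F A ∘ₗ (antipode F).rTensor A)) z)) h
  simp only [map_sum, LinearMap.rTensor_tmul, LinearMap.lTensor_tmul,
    LinearMap.comp_apply, LinearMap.mul'_apply, evR_tmul, LinearMap.mulLeft_apply,
    ← mul_assoc] at h2
  rw [h2]
  simp_rw [← Finset.sum_smul, ← map_sum, mul_assoc, ← Finset.mul_sum, sum_antipode_mul_eq_smul]
  have h3 := congrArg (TensorProduct.rid F A) (sum_tmul_counit_eq (ℛ F a))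
  simp only [map_sum, TensorProduct.rid_tmul, one_smul] at h3
  conv_rhs => rw [← h3]
  simp [Finset.smul_sum, smul_smul, mul_comm]

open scoped TensorProduct Coalgebra in
open Coalgebra HopfAlgebra in
lemma T_inj {F A ι : Type*} [Field F] [Ring A] [HopfAlgebra F A] [Fintype ι]
    (e : Module.Basis ι F A) (a : ι → A)
    (h : ∀ x, ∑ i, evR (e.coord i) (comul (R := F) (x * a i)) = 0) : a = 0 := by
  have h1 : ∀ x, ∑ i, evR (e.coord i ∘ₗ LinearMap.mulLeft F x) (comul (R := F) (a i)) = 0 := by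
    intro x
    simp_rw [← evR_mul', ← galois_one x, Finset.sum_mul, map_sum, mul_assoc, evR_mul,
      ← Bialgebra.comul_mul]
    rw [Finset.sum_comm]
    simp_rw [← Finset.mul_sum, h, mul_zero, Finset.sum_const_zero]
  have h2 : ∀ x, ∑ i, e.coord i x • a i = 0 := by
    intro x
    have h3 : ∑ j, evR (e.coord j ∘ₗ LinearMap.mulLeft F x ∘ₗ antipode F) (comul (R := F)
      (∑ i, evR (e.coord i ∘ₗ LinearMap.mulLeft F (e j)) (comul (R := F) (a i)))) = 0 := by
      simp [h1]
    rw [← h3]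
    simp_rw [map_sum]
    rw [Finset.sum_comm]
    refine Finset.sum_congr rfl fun i _ => ?_
    rw [← galois_two]
    have h4 : ∀ j, evR (e.coord i ∘ₗ LinearMap.mulLeft F (e j)) (comul (R := F) (a i)) =
        ∑ k ∈ (ℛ F (a i)).index, e.coord i (e j * (ℛ F (a i)).right k) • (ℛ F (a i)).left k := by
      intro j
      conv_lhs => rw [← (ℛ F (a i)).eq]
      simp only [map_sum, evR_tmul, LinearMap.comp_apply, LinearMap.mulLeft_apply]
    simp_rw [h4, map_sum, map_smul]
    rw [Finset.sum_comm]
    refine Finset.sum_congr rfl fun k _ => ?_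
    have h5 : ∀ j, evR (e.coord j ∘ₗ LinearMap.mulLeft F x ∘ₗ antipode F)
        (comul (R := F) ((ℛ F (a i)).left k)) =
        ∑ l ∈ (ℛ F ((ℛ F (a i)).left k)).index,
          e.coord j (x * antipode F ((ℛ F ((ℛ F (a i)).left k)).right l)) •
            (ℛ F ((ℛ F (a i)).left k)).left l := by
      intro j
      conv_lhs => rw [← (ℛ F ((ℛ F (a i)).left k)).eq]
      simp only [map_sum, evR_tmul, LinearMap.comp_apply, LinearMap.mulLeft_apply]
    simp_rw [h5, Finset.smul_sum]
    rw [Finset.sum_comm]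
    refine Finset.sum_congr rfl fun l _ => ?_
    simp_rw [smul_smul, ← Finset.sum_smul]
    congr 1
    conv_lhs => rw [← e.sum_repr (x * antipode F ((ℛ F ((ℛ F (a i)).left k)).right l))]
    rw [Finset.sum_mul, map_sum]
    refine Finset.sum_congr rfl fun j _ => ?_
    rw [smul_mul_assoc, map_smul, smul_eq_mul, mul_comm, e.coord_apply j]
  classical
  funext i
  have := h2 (e i)
  simpa [Finsupp.single_apply, ite_smul] using this

open Coalgebra in
/-- The comparison map `A^n → End(A)`. -/
noncomputable def TMap {F A ι : Type*} [Field F] [Ring A] [HopfAlgebra F A] [Fintype ι]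
    (e : Module.Basis ι F A) : (ι → A) →ₗ[F] (A →ₗ[F] A) where
  toFun a := ∑ i, evR (e.coord i) ∘ₗ comul ∘ₗ LinearMap.mulRight F (a i)
  map_add' a b := by
    ext x; simp [mul_add, Finset.sum_add_distrib, -Bialgebra.comul_mul]
  map_smul' c a := by
    ext x; simp [Finset.smul_sum, -Bialgebra.comul_mul]

open Coalgebra in
lemma TMap_apply {F A ι : Type*} [Field F] [Ring A] [HopfAlgebra F A] [Fintype ι]
    (e : Module.Basis ι F A) (a : ι → A) (x : A) :
    TMap e a x = ∑ i, evR (e.coord i) (comul (R := F) (x * a i)) := by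
  simp [TMap, -Bialgebra.comul_mul]

lemma TMap_smul {F A ι : Type*} [Field F] [Ring A] [HopfAlgebra F A] [Fintype ι]
    (e : Module.Basis ι F A) (a : ι → A) (b x : A) :
    TMap e (b • a) x = TMap e a (x * b) := by
  simp only [TMap_apply, Pi.smul_apply, smul_eq_mul, mul_assoc]

lemma TMap_bij {F A ι : Type*} [Field F] [Ring A] [HopfAlgebra F A] [Fintype ι]
    (e : Module.Basis ι F A) : Function.Bijective (TMap e) := by
  have : FiniteDimensional F A := Module.Finite.of_basis e
  have hi : Function.Injective (TMap e) := by
    rw [injective_iff_map_eq_zero]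
    intro a ha
    refine T_inj e a fun x => ?_
    rw [← TMap_apply, ha, LinearMap.zero_apply]
  refine ⟨hi, (LinearMap.injective_iff_surjective_of_finrank_eq_finrank ?_).1 hi⟩
  rw [Module.finrank_pi_fintype, Module.finrank_linearMap, Module.finrank_eq_card_basis e]
  simp

/-- Proposition 2.18 / A.14(ii) of the paper. For a
finite-dimensional Hopf algebra `A` over a field `F` and a finite-dimensional
`A`-module `V`, one has `dim_F Hom_A(V, A) = dim_F V`. -/
theorem stmt9 (F : Type*) [Field F] (A : Type*) [Ring A] [HopfAlgebra F A]
    [FiniteDimensional F A]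
    (V : Type*) [AddCommGroup V] [Module A V] [Module F V] [IsScalarTower F A V]
    [FiniteDimensional F V] :
    Module.finrank F (V →ₗ[A] A) = Module.finrank F V := by
  classical
  have : Nontrivial A := by
    refine ⟨1, 0, fun h => ?_⟩
    have := congrArg (Coalgebra.counit (R := F)) h
    simp at this
  let n := Module.finrank F A
  have hn : 0 < n := Module.finrank_pos
  let e : Module.Basis (Fin n) F A := Module.finBasis F A
  let T := LinearEquiv.ofBijective (TMap e) (TMap_bij e)
  have hT : ∀ (b : A) (a : Fin n → A) (x : A), T (b • a) x = T a (x * b) :=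
    fun b a x => TMap_smul e a b x
  -- orbit maps
  let orb : V → (A →ₗ[F] V) := fun v => ((LinearMap.toSpanSingleton A V v).restrictScalars F)
  have horb : ∀ v x, orb v x = x • v := fun v x => rfl
  let Ψ : (Fin n → (V →ₗ[A] A)) →ₗ[F] (V →ₗ[F] A) :=
    { toFun := fun f =>
        { toFun := fun v => T (fun i => f i v) 1
          map_add' := fun v w => by
            have : (fun i => f i (v + w)) = (fun i => f i v) + (fun i => f i w) := by
              ext i; simp
            rw [this, map_add, LinearMap.add_apply]
          map_smul' := fun c v => by
            have : (fun i => f i (c • v)) = c • (fun i => f i v) := by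
              ext i
              simp only [Pi.smul_apply]
              rw [← algebraMap_smul A c v, map_smul, algebraMap_smul]
            rw [this, map_smul, LinearMap.smul_apply, RingHom.id_apply] }
      map_add' := fun f g => by
        ext v
        have : (fun i => (f + g) i v) = (fun i => f i v) + (fun i => g i v) := by
          ext i; simp
        simp only [LinearMap.coe_mk, AddHom.coe_mk, LinearMap.add_apply]
        rw [this, map_add, LinearMap.add_apply]
      map_smul' := fun c f => by
        ext v
        have : (fun i => (c • f) i v) = c • (fun i => f i v) := by
          ext i; simp
        simp only [LinearMap.coe_mk, AddHom.coe_mk, LinearMap.smul_apply, RingHom.id_apply]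
        rw [this, map_smul, LinearMap.smul_apply] }
  have hΨ : ∀ f v, Ψ f v = T (fun i => f i v) 1 := fun f v => rfl
  have hinj : Function.Injective Ψ := by
    rw [injective_iff_map_eq_zero]
    intro f hf
    have key : ∀ v, (fun i => f i v) = 0 := by
      intro v
      apply T.injective
      rw [map_zero]
      ext x
      have h1 : (x • fun i => f i v) = fun i => f i (x • v) := by
        ext i; simp
      have h2 := hT x (fun i => f i v) 1
      rw [one_mul, h1, ← hΨ, hf] at h2
      simpa using h2.symm
    funext i
    ext v
    exact congrFun (key v) i
  have hsurj : Function.Surjective Ψ := by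
    intro k
    let g : V →ₗ[A] (Fin n → A) :=
      { toFun := fun v => T.symm (k ∘ₗ orb v)
        map_add' := fun v w => by
          rw [← map_add]
          congr 1
          ext x
          simp [horb]
        map_smul' := fun b v => by
          apply T.injective
          ext x
          rw [RingHom.id_apply, hT, T.apply_symm_apply, T.apply_symm_apply]
          simp [horb, mul_smul] }
    refine ⟨fun i => LinearMap.proj i ∘ₗ g, ?_⟩
    ext v
    rw [hΨ]
    change T (T.symm (k ∘ₗ orb v)) 1 = _
    rw [T.apply_symm_apply]
    simp [horb]
  have hfin := (LinearEquiv.ofBijective Ψ ⟨hinj, hsurj⟩).finrank_eq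
  have : FiniteDimensional F (V →ₗ[A] A) := by
    let ρ : (V →ₗ[A] A) →ₗ[F] (Fin n → (V →ₗ[A] A)) := LinearMap.pi fun _ => LinearMap.id
    refine Module.Finite.of_injective (Ψ ∘ₗ ρ) (hinj.comp fun f g h => ?_)
    exact congrFun h ⟨0, hn⟩
  rw [Module.finrank_pi_fintype, Module.finrank_linearMap F F V A] at hfin
  simp only [Finset.sum_const, Finset.card_univ, Fintype.card_fin, smul_eq_mul] at hfin
  rw [mul_comm] at hfin
  exact Nat.eq_of_mul_eq_mul_right hn hfin
end

section
/- Let F be a field and let A be a finite-dimensional Hopf algebra over F with counit ε : A → F. Then the F-subspace A^A := {a ∈ A : b·a = ε(b)·a for all b ∈ A} (the space of left integrals of A) has dimension dim_F A^A = 1. -/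
/-- The `F`-subspace of left integrals
`A^A = {a ∈ A : b·a = ε(b)·a for all b ∈ A}` of a bialgebra `A` over `F`. -/
def leftIntegrals (F : Type*) (A : Type*) [CommSemiring F] [Semiring A]
    [Bialgebra F A] : Submodule F A where
  carrier := {a : A | ∀ b : A, b * a = CoalgebraStruct.counit (R := F) b • a}
  add_mem' := by
    intro x y hx hy b
    rw [mul_add, hx b, hy b, smul_add]
  zero_mem' := by
    intro b
    rw [mul_zero, smul_zero]
  smul_mem' := by
    intro c x hx b
    rw [mul_smul_comm, hx b, smul_comm]

namespace IntegralProof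

open Coalgebra HopfAlgebra TensorProduct WithConv

section

variable {F : Type*} [Field F] {A : Type*} [Ring A] [HopfAlgebra F A]

lemma coassoc3 {M : Type*} [AddCommGroup M] [Module F M] (K : A ⊗[F] (A ⊗[F] A) →ₗ[F] M) (a : A) :
    ∑ i ∈ (ℛ F a).index, ∑ j ∈ (ℛ F ((ℛ F a).left i)).index,
      K ((ℛ F ((ℛ F a).left i)).left j ⊗ₜ
        ((ℛ F ((ℛ F a).left i)).right j ⊗ₜ (ℛ F a).right i)) =
    ∑ i ∈ (ℛ F a).index, ∑ j ∈ (ℛ F ((ℛ F a).right i)).index,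
      K ((ℛ F a).left i ⊗ₜ
        ((ℛ F ((ℛ F a).right i)).left j ⊗ₜ (ℛ F ((ℛ F a).right i)).right j)) := by
  have h := sum_tmul_tmul_eq (ℛ F a) (fun i => ℛ F ((ℛ F a).left i))
    (fun i => ℛ F ((ℛ F a).right i))
  simpa only [map_sum] using congrArg K h

lemma comul_eq (a : A) :
    comul (R := F) a = ∑ i ∈ (ℛ F a).index, (ℛ F a).left i ⊗ₜ (ℛ F a).right i :=
  (ℛ F a).eq.symm

lemma sum_counit_right (a : A) :
    ∑ i ∈ (ℛ F a).index, counit (R := F) ((ℛ F a).right i) • (ℛ F a).left i = a := by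
  have := congrArg (TensorProduct.rid F A) (sum_tmul_counit_eq (ℛ F a))
  simpa only [map_sum, TensorProduct.rid_tmul, one_smul] using this

lemma antipode_left_comul (r : A) :
    ∑ i ∈ (ℛ F r).index, (antipode F ((ℛ F r).left i) ⊗ₜ[F] (1 : A)) *
      comul (R := F) ((ℛ F r).right i) = 1 ⊗ₜ r := by
  let K : A ⊗[F] (A ⊗[F] A) →ₗ[F] A ⊗[F] A :=
    LinearMap.mul' F (A ⊗[F] A) ∘ₗ
      TensorProduct.map ((Algebra.TensorProduct.includeLeft (R := F) (S := F) (A := A)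
        (B := A)).toLinearMap ∘ₗ antipode F) LinearMap.id
  have hK : ∀ x y z, K (x ⊗ₜ (y ⊗ₜ z)) = (antipode F x * y) ⊗ₜ z := by
    intro x y z; simp [K]
  have h := coassoc3 K r
  simp only [hK] at h
  calc _ = _ := by
        refine Finset.sum_congr rfl fun i _ => ?_
        rw [comul_eq, Finset.mul_sum]
        simp only [Algebra.TensorProduct.tmul_mul_tmul, one_mul]
    _ = _ := h.symm
    _ = ∑ i ∈ (ℛ F r).index, (1 : A) ⊗ₜ[F] (counit (R := F) ((ℛ F r).left i) • (ℛ F r).right i) := by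
        refine Finset.sum_congr rfl fun i _ => ?_
        rw [← TensorProduct.sum_tmul, sum_antipode_mul_eq_smul, TensorProduct.smul_tmul]
    _ = _ := by rw [← TensorProduct.tmul_sum, sum_counit_smul]

lemma comul_antipode (a : A) :
    comul (R := F) (antipode F a) =
      ∑ i ∈ (ℛ F a).index, antipode F ((ℛ F a).right i) ⊗ₜ antipode F ((ℛ F a).left i) := by
  let G : A →ₗ[F] A ⊗[F] A :=
    TensorProduct.map (antipode F) (antipode F) ∘ₗ (TensorProduct.comm F A A).toLinearMap ∘ₗ comul
  have hG : ∀ a, G a =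
      ∑ i ∈ (ℛ F a).index, antipode F ((ℛ F a).right i) ⊗ₜ antipode F ((ℛ F a).left i) := by
    intro a
    simp [G, comul_eq a, map_sum]
  have h1 : toConv G * toConv (comul (R := F) (A := A)) = 1 := by
    ext a
    rw [(ℛ F a).convMul_apply]
    let K : A ⊗[F] (A ⊗[F] A) →ₗ[F] A ⊗[F] A :=
      LinearMap.mul' F (A ⊗[F] A) ∘ₗ
        TensorProduct.map (TensorProduct.map (antipode F) (antipode F) ∘ₗ
          (TensorProduct.comm F A A).toLinearMap) comul ∘ₗ
        (TensorProduct.assoc F A A A).symm.toLinearMap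
    have hK : ∀ x y z, K (x ⊗ₜ (y ⊗ₜ z)) = (antipode F y ⊗ₜ antipode F x) * comul z := by
      intro x y z; simp [K]
    have h := coassoc3 K a
    simp only [hK] at h
    calc _ = _ := by
          refine Finset.sum_congr rfl fun i _ => ?_
          change G _ * comul (R := F) _ = _
          rw [hG, Finset.sum_mul]
      _ = _ := h
      _ = ∑ i ∈ (ℛ F a).index, (1 : A) ⊗ₜ[F] (antipode F ((ℛ F a).left i) * (ℛ F a).right i) := by
          refine Finset.sum_congr rfl fun i _ => ?_
          have h2 : ∀ y : A, (antipode F y ⊗ₜ[F] antipode F ((ℛ F a).left i)) =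
              ((1 : A) ⊗ₜ[F] antipode F ((ℛ F a).left i)) * (antipode F y ⊗ₜ[F] (1 : A)) := by
            intro y; simp
          simp only [h2, mul_assoc]
          rw [← Finset.mul_sum, antipode_left_comul]
          simp
      _ = _ := by
          rw [← TensorProduct.tmul_sum, sum_antipode_mul_eq_smul]
          simp [LinearMap.convOne_def, Algebra.algebraMap_eq_smul_one,
            Algebra.TensorProduct.one_def]
  have h2 := left_inv_eq_right_inv h1 (LinearMap.comul_right_inv (R := F) (C := A))
  have h3 : G = comul ∘ₗ antipode F := toConv_injective h2
  rw [← hG, h3]; rfl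

/-- Contraction of the second tensor factor. -/
noncomputable def ctr {M : Type*} [AddCommGroup M] [Module F M] (φ : M →ₗ[F] F) :
    A ⊗[F] M →ₗ[F] A :=
  (TensorProduct.rid F A).toLinearMap ∘ₗ LinearMap.lTensor A φ

@[simp] lemma ctr_tmul {M : Type*} [AddCommGroup M] [Module F M] (φ : M →ₗ[F] F) (a : A) (m : M) :
    ctr φ (a ⊗ₜ m) = φ m • a := by
  simp [ctr]

/-- The right action of the dual. -/
noncomputable def act : (A →ₗ[F] F) →ₗ[F] A →ₗ[F] A where
  toFun f := ctr (f ∘ₗ antipode F) ∘ₗ comul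
  map_add' f g := by
    ext m
    simp [comul_eq m, map_sum, add_smul, Finset.sum_add_distrib]
  map_smul' c f := by
    ext m
    simp [comul_eq m, map_sum, mul_smul, Finset.smul_sum]

lemma act_def (f : A →ₗ[F] F) (m : A) : act f m = ctr (f ∘ₗ antipode F) (comul m) := rfl

lemma act_apply (f : A →ₗ[F] F) (m : A) :
    act f m = ∑ i ∈ (ℛ F m).index, f (antipode F ((ℛ F m).right i)) • (ℛ F m).left i := by
  simp [act_def, comul_eq m, map_sum]

lemma act_counit (m : A) : act (counit (R := F)) m = m := by
  simp [act_apply, sum_counit_right]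

/-- Convolution of functionals. -/
noncomputable def cv (f g : A →ₗ[F] F) : A →ₗ[F] F :=
  LinearMap.mul' F F ∘ₗ TensorProduct.map f g ∘ₗ comul

lemma act_act (f g : A →ₗ[F] F) (m : A) : act g (act f m) = act (cv f g) m := by
  let φ : A ⊗[F] A →ₗ[F] F := LinearMap.mul' F F ∘ₗ TensorProduct.map f g ∘ₗ
    (TensorProduct.comm F A A).toLinearMap ∘ₗ TensorProduct.map (antipode F) (antipode F)
  have hφ : ∀ x y, φ (x ⊗ₜ y) = f (antipode F y) * g (antipode F x) := by
    intro x y; simp [φ]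
  have h := coassoc3 (ctr (A := A) φ) m
  simp only [ctr_tmul, hφ] at h
  rw [act_apply f m, act_apply (cv f g) m, map_sum]
  calc _ = _ := by
        refine Finset.sum_congr rfl fun i _ => ?_
        rw [map_smul, act_apply, Finset.smul_sum]
        simp only [← mul_smul]
    _ = _ := h
    _ = _ := by
        refine Finset.sum_congr rfl fun i _ => ?_
        rw [← Finset.sum_smul]
        congr 1
        simp [cv, comul_antipode, map_sum]

lemma mul_act (b : A) (f : A →ₗ[F] F) (m : A) :
    b * act f m = ∑ i ∈ (ℛ F b).index,
      act (f ∘ₗ LinearMap.mulRight F ((ℛ F b).right i)) ((ℛ F b).left i * m) := by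
  simp only [act_def, Bialgebra.comul_mul]
  generalize comul (R := F) m = z
  induction z with
  | zero => simp
  | add x y hx hy => simp only [mul_add, map_add, Finset.sum_add_distrib, hx, hy]
  | tmul u v =>
    let φ : A ⊗[F] A →ₗ[F] F := f ∘ₗ LinearMap.mulLeft F (antipode F v) ∘ₗ
      LinearMap.mul' F A ∘ₗ TensorProduct.map (antipode F) LinearMap.id
    have hφ : ∀ x y, φ (x ⊗ₜ y) = f (antipode F v * (antipode F x * y)) := by
      intro x y; simp [φ]
    have h := coassoc3 (LinearMap.mulRight F u ∘ₗ ctr (A := A) φ) b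
    simp only [LinearMap.comp_apply, ctr_tmul, hφ, LinearMap.mulRight_apply] at h
    symm
    calc _ = _ := by
          refine Finset.sum_congr rfl fun i _ => ?_
          rw [comul_eq, Finset.sum_mul, map_sum]
          simp [antipode_mul_antidistrib, mul_assoc]
      _ = _ := h
      _ = ∑ i ∈ (ℛ F b).index, f (antipode F v) •
            ((counit (R := F) ((ℛ F b).right i) • (ℛ F b).left i) * u) := by
          refine Finset.sum_congr rfl fun i _ => ?_
          rw [← Finset.sum_mul, ← Finset.sum_smul, ← map_sum, ← Finset.mul_sum,
            sum_antipode_mul_eq_smul]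
          simp only [mul_smul_comm, mul_one, map_smul, smul_eq_mul, smul_mul_assoc, smul_smul]
          rw [mul_comm]
      _ = _ := by
          rw [← Finset.smul_sum, ← Finset.sum_mul, sum_counit_right]
          simp

lemma mul_act_integral (b : A) (f : A →ₗ[F] F) (t : A) (ht : t ∈ leftIntegrals F A) :
    b * act f t = act (f ∘ₗ LinearMap.mulRight F b) t := by
  have ht' : ∀ b : A, b * t = counit (R := F) b • t := ht
  rw [mul_act]
  simp only [ht', map_smul]
  have h : f ∘ₗ LinearMap.mulRight F b = ∑ i ∈ (ℛ F b).index,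
      counit (R := F) ((ℛ F b).left i) • (f ∘ₗ LinearMap.mulRight F ((ℛ F b).right i)) := by
    ext x
    conv_lhs => rw [← sum_counit_smul (ℛ F b)]
    simp [Finset.mul_sum, map_sum]
  rw [h, map_sum, LinearMap.sum_apply]
  simp only [map_smul, LinearMap.smul_apply]

variable [FiniteDimensional F A]

lemma hom_induction {M : Type*} [AddCommGroup M] [Module F M] {p : (A →ₗ[F] M) → Prop}
    (h0 : p 0) (hadd : ∀ L L', p L → p L' → p (L + L'))
    (h1 : ∀ (f : A →ₗ[F] F) (m : M), p (f.smulRight m)) (L : A →ₗ[F] M) : p L := by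
  have : L = ∑ i, ((Module.finBasis F A).coord i).smulRight (L (Module.finBasis F A i)) := by
    apply (Module.finBasis F A).ext
    intro j
    simp [Finsupp.single_apply, ite_smul]
  rw [this]
  exact Finset.sum_induction _ p hadd h0 (fun i _ => h1 _ _)

/-- Contraction of `End A` via the action. -/
noncomputable def Th : (A →ₗ[F] A) →ₗ[F] A where
  toFun L := ∑ i, act ((Module.finBasis F A).coord i) (L (Module.finBasis F A i))
  map_add' L L' := by simp [Finset.sum_add_distrib]
  map_smul' c L := by simp [Finset.smul_sum]

lemma Th_smulRight (f : A →ₗ[F] F) (m : A) : Th (f.smulRight m) = act f m := by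
  have : f = ∑ i, f (Module.finBasis F A i) • (Module.finBasis F A).coord i := by
    apply (Module.finBasis F A).ext
    intro j
    simp [Finsupp.single_apply]
  conv_rhs => rw [this]
  simp only [Th, map_sum, LinearMap.coe_mk, AddHom.coe_mk, LinearMap.smulRight_apply, map_smul,
    LinearMap.sum_apply, LinearMap.smul_apply]

lemma mul_Th (b : A) (L : A →ₗ[F] A) :
    b * Th L = Th (∑ i ∈ (ℛ F b).index, LinearMap.mulLeft F ((ℛ F b).left i) ∘ₗ L ∘ₗ
      LinearMap.mulRight F ((ℛ F b).right i)) := by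
  rw [map_sum]
  induction L using hom_induction with
  | h0 => simp
  | hadd L L' h h' =>
    simp only [map_add, mul_add, h, h', LinearMap.add_comp, LinearMap.comp_add,
      Finset.sum_add_distrib]
  | h1 f m =>
    rw [Th_smulRight, mul_act]
    refine Finset.sum_congr rfl fun i _ => ?_
    rw [← Th_smulRight]
    congr 1
    ext x
    simp

lemma Th_Th (B : A →ₗ[F] A →ₗ[F] A) :
    Th (Th ∘ₗ B) = Th (TensorProduct.lift B.flip ∘ₗ comul) := by
  induction B using hom_induction with
  | h0 =>
    congr 1
    ext x
    simp [comul_eq x, map_sum]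
  | hadd L L' h h' =>
    have : TensorProduct.lift (L + L').flip ∘ₗ comul =
      TensorProduct.lift L.flip ∘ₗ comul + TensorProduct.lift L'.flip ∘ₗ comul (R := F) := by
      ext x
      simp [comul_eq x, map_sum, Finset.sum_add_distrib]
    rw [this, map_add, LinearMap.comp_add, map_add, h, h']
  | h1 g L =>
    induction L using hom_induction with
    | h0 =>
      congr 1
      ext x
      simp [comul_eq x, map_sum]
    | hadd L L' h h' =>
      have e : g.smulRight (L + L') = g.smulRight L + g.smulRight L' := by
        ext x; simp
      have : TensorProduct.lift (g.smulRight L + g.smulRight L').flip ∘ₗ comul =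
        TensorProduct.lift (g.smulRight L).flip ∘ₗ comul +
          TensorProduct.lift (g.smulRight L').flip ∘ₗ comul (R := F) := by
        ext x
        simp [comul_eq x, map_sum, Finset.sum_add_distrib]
      rw [e, this, map_add, LinearMap.comp_add, map_add, h, h']
    | h1 f m =>
      have e1 : Th ∘ₗ g.smulRight (f.smulRight m) = g.smulRight (act f m) := by
        ext x
        simp [Th_smulRight]
      have e2 : TensorProduct.lift (g.smulRight (f.smulRight m)).flip ∘ₗ comul =
          (cv f g).smulRight m := by
        ext x
        simp [comul_eq x, map_sum, cv, Finset.sum_smul, smul_smul, mul_comm]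
      rw [e1, e2, Th_smulRight, Th_smulRight, act_act]

variable (F) in
/-- The projection onto integrals. -/
noncomputable def P : A →ₗ[F] A where
  toFun a := Th (LinearMap.mulRight F a ∘ₗ antipode F)
  map_add' a b := by
    rw [← map_add]; congr 1; ext x; simp [mul_add]
  map_smul' c a := by
    rw [← map_smul]; congr 1; ext x; simp

lemma P_def (a : A) : P F a = Th (LinearMap.mulRight F a ∘ₗ antipode F) := rfl

lemma P_mem (a : A) : P F a ∈ leftIntegrals F A := by
  intro b
  rw [P_def, mul_Th, ← map_smul]
  congr 1
  ext x
  have h := sum_mul_antipode_eq_smul (R := F) (ℛ F b)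
  have h2 := congrArg (· * (antipode F x * a)) h
  simpa [Finset.sum_mul, mul_assoc, antipode_mul_antidistrib] using h2

lemma Th_P (a : A) : Th (P F ∘ₗ LinearMap.mulRight F a) = a := by
  let B : A →ₗ[F] A →ₗ[F] A := LinearMap.mk₂ F (fun x y => antipode F y * (x * a))
    (by intros; simp [add_mul, mul_add]) (by intros; simp)
    (by intros; simp [add_mul]) (by intros; simp)
  have e1 : P F ∘ₗ LinearMap.mulRight F a = Th ∘ₗ B := by
    ext x
    simp only [LinearMap.comp_apply, P_def]
    congr 1
  have e2 : TensorProduct.lift B.flip ∘ₗ comul = (counit (R := F)).smulRight a := by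
    ext x
    have h := congrArg (· * a) (sum_antipode_mul_eq_smul (R := F) (ℛ F x))
    simpa [comul_eq x, map_sum, B, Finset.sum_mul, mul_assoc] using h
  rw [e1, Th_Th, e2, Th_smulRight, act_counit]

lemma P_act (f : A →ₗ[F] F) (t : A) (ht : t ∈ leftIntegrals F A) : P F (act f t) = f 1 • t := by
  let B : A →ₗ[F] A →ₗ[F] A := LinearMap.mk₂ F (fun x y => f (y * antipode F x) • t)
    (by intros; simp [add_smul, mul_add]) (by intros; simp [mul_smul])
    (by intros; simp [add_mul, add_smul]) (by intros; simp [mul_smul])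
  have e1 : LinearMap.mulRight F (act f t) ∘ₗ antipode F = Th ∘ₗ B := by
    ext x
    simp only [LinearMap.comp_apply, LinearMap.mulRight_apply]
    rw [mul_act_integral _ _ _ ht, ← Th_smulRight]
    congr 1
  have e2 : TensorProduct.lift B.flip ∘ₗ comul = (counit (R := F)).smulRight (f 1 • t) := by
    ext x
    have h := congrArg (fun z => f z • t) (sum_mul_antipode_eq_smul (R := F) (ℛ F x))
    simpa [comul_eq x, map_sum, B, Finset.sum_smul, mul_smul] using h
  rw [P_def, e1, Th_Th, e2, Th_smulRight, act_counit]

lemma P_mul_Th (L : A →ₗ[F] leftIntegrals F A) (b : A) :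
    P F (b * Th ((leftIntegrals F A).subtype ∘ₗ L)) = L b := by
  induction L using hom_induction with
  | h0 => simp
  | hadd L L' h h' => simp only [LinearMap.comp_add, map_add, mul_add, h, h']; rfl
  | h1 f t =>
    have : (leftIntegrals F A).subtype ∘ₗ f.smulRight t = f.smulRight (t : A) := by
      ext x; simp
    rw [this, Th_smulRight, mul_act_integral _ _ _ t.2, P_act _ _ t.2]
    simp

variable (F A) in
/-- The fundamental theorem of Hopf modules for `A`. -/
noncomputable def equiv : (A →ₗ[F] leftIntegrals F A) ≃ₗ[F] A where
  toFun L := Th ((leftIntegrals F A).subtype ∘ₗ L)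
  map_add' L L' := by rw [LinearMap.comp_add, map_add]
  map_smul' c L := by rw [LinearMap.comp_smul, map_smul]; rfl
  invFun a := (P F ∘ₗ LinearMap.mulRight F a).codRestrict _ (fun _ => P_mem _)
  left_inv L := by
    ext b
    exact P_mul_Th L b
  right_inv a := Th_P a

end

end IntegralProof

/-- Proposition A.14(i) of the paper; uniqueness of left
integrals. For a finite-dimensional Hopf algebra `A` over a field `F`, the
space of left integrals `A^A = {a ∈ A : b·a = ε(b)·a for all b ∈ A}` is
one-dimensional. -/
theorem stmt10 (F : Type*) [Field F] (A : Type*) [Ring A] [HopfAlgebra F A]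
    [FiniteDimensional F A] :
    Module.finrank F (leftIntegrals F A) = 1 := by
  have h := (IntegralProof.equiv F A).finrank_eq
  rw [Module.finrank_linearMap] at h
  have : Nontrivial A := by
    refine ⟨1, 0, fun h => ?_⟩
    have h2 := congrArg (Coalgebra.counit (R := F)) h
    simp at h2
  have hpos : 0 < Module.finrank F A := Module.finrank_pos
  exact Nat.eq_of_mul_eq_mul_left hpos (by rw [h, mul_one])
end

section
/- Let F be a field, let A be a finite-dimensional Hopf algebra over F, and let e ∈ A be an idempotent (e·e = e). Then dim_F (Ae) = dim_F (eA), where Ae = {a·e : a ∈ A} and eA = {e·a : a ∈ A} are F-subspaces of A. -/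
open TensorProduct in
lemma aux_rank_left (F : Type*) [Field F] {A V : Type*} [AddCommGroup A] [Module F A]
    [AddCommGroup V] [Module F V] (L : A →ₗ[F] A) :
    Module.finrank F (LinearMap.range (L.rTensor V)) =
      Module.finrank F (LinearMap.range L) * Module.finrank F V := by
  have h : L.rTensor V = (LinearMap.range L).subtype.rTensor V ∘ₗ L.rangeRestrict.rTensor V := by
    rw [← LinearMap.rTensor_comp]; rfl
  rw [h, LinearMap.range_comp_of_range_eq_top _ (LinearMap.range_eq_top.2
    (LinearMap.rTensor_surjective V (LinearMap.surjective_rangeRestrict L))),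
    LinearMap.finrank_range_of_inj, Module.finrank_tensorProduct]
  exact Module.Flat.rTensor_preserves_injective_linearMap _ (Submodule.injective_subtype _)

lemma aux_rank_right (F : Type*) [Field F] {A : Type*} [AddCommGroup A] [Module F A]
    [FiniteDimensional F A] (R : A →ₗ[F] A) :
    Module.finrank F (LinearMap.range (LinearMap.lcomp F A R)) =
      Module.finrank F (LinearMap.range R) * Module.finrank F A := by
  have h : LinearMap.lcomp F A R = LinearMap.lcomp F A R.rangeRestrict ∘ₗ
      LinearMap.lcomp F A (LinearMap.range R).subtype := rfl
  rw [h, LinearMap.range_comp_of_range_eq_top, LinearMap.finrank_range_of_inj,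
    Module.finrank_linearMap]
  · intro f g hfg
    ext ⟨_, x, rfl⟩
    exact LinearMap.congr_fun hfg x
  · rw [LinearMap.range_eq_top]
    intro g
    obtain ⟨g', hg'⟩ := LinearMap.exists_extend g
    exact ⟨g', hg'⟩

section aux
open TensorProduct Coalgebra

variable (F : Type*) [Field F] (A : Type*) [Ring A] [HopfAlgebra F A]

/-- `a ⊗ v ↦ a₁ ⊗ σ(a₂) v`. -/
noncomputable def auxPsi {V : Type*} [AddCommGroup V] [Module F V]
    (σ : A →ₗ[F] V →ₗ[F] V) : A ⊗[F] V →ₗ[F] A ⊗[F] V :=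
  (TensorProduct.lift σ).lTensor A ∘ₗ (TensorProduct.assoc F A A V).toLinearMap ∘ₗ
    (comul (R := F) (A := A)).rTensor V

/-- The right-multiplication action of `A` on its dual. -/
noncomputable def auxRho : A →ₗ[F] Module.Dual F A →ₗ[F] Module.Dual F A :=
  (LinearMap.llcomp F A A F).flip ∘ₗ (LinearMap.mul F A).flip

lemma auxRho_apply (a : A) (f : Module.Dual F A) (x : A) : auxRho F A a f x = f (x * a) := rfl

lemma auxPsi_left_inv (a : A) (f : Module.Dual F A) :
    auxPsi F A (auxRho F A ∘ₗ HopfAlgebra.antipode F) (auxPsi F A (auxRho F A) (a ⊗ₜ f)) =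
      a ⊗ₜ f := by
  -- `y ⊗ z ↦ S(y) • z • f`
  let g : A ⊗[F] A →ₗ[F] Module.Dual F A :=
    (auxRho F A).flip f ∘ₗ LinearMap.mul' F A ∘ₗ (HopfAlgebra.antipode F (A := A)).rTensor A
  have h1 : ∀ t : A ⊗[F] A,
      auxPsi F A (auxRho F A ∘ₗ HopfAlgebra.antipode F)
        ((TensorProduct.lift (auxRho F A)).lTensor A (TensorProduct.assoc F A A _ (t ⊗ₜ f))) =
      g.lTensor A (TensorProduct.assoc F A A A ((comul (R := F)).rTensor A t)) := by
    intro t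
    induction t with
    | zero => simp
    | add x y hx hy => simp only [add_tmul, map_add, hx, hy]
    | tmul x y =>
      simp only [auxPsi, assoc_tmul, LinearMap.lTensor_tmul, lift.tmul, LinearMap.comp_apply,
        LinearEquiv.coe_coe, LinearMap.rTensor_tmul]
      generalize (comul (R := F) x) = u
      induction u with
      | zero => simp
      | add x y hx hy => simp only [add_tmul, map_add, hx, hy]
      | tmul u v =>
        simp only [assoc_tmul, LinearMap.lTensor_tmul, lift.tmul, LinearMap.comp_apply]
        congr 1
        ext z
        simp [g, auxRho_apply, mul_assoc]
  have h2 : g ∘ₗ comul = LinearMap.toSpanSingleton F _ f ∘ₗ counit := by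
    ext c z
    simp only [g, LinearMap.comp_apply, HopfAlgebra.mul_antipode_rTensor_comul_apply]
    simp [auxRho_apply, Algebra.algebraMap_eq_smul_one]
  have h3 := h1 (comul a)
  rw [coassoc_apply, ← LinearMap.comp_apply (LinearMap.lTensor A g), ← LinearMap.lTensor_comp, h2,
    LinearMap.lTensor_comp, LinearMap.comp_apply, lTensor_counit_comul] at h3
  simpa [auxPsi] using h3

lemma auxPsi_inj : Function.Injective (auxPsi F A (auxRho F A)) := by
  refine Function.LeftInverse.injective
    (g := auxPsi F A (auxRho F A ∘ₗ HopfAlgebra.antipode F)) ?_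
  intro t
  induction t with
  | zero => simp
  | add x y hx hy => simp only [map_add, hx, hy]
  | tmul a f => exact auxPsi_left_inv F A a f

/-- Convolution by the identity, `g ↦ (x ↦ x₁ g(x₂))`. -/
noncomputable def auxPhi : (A →ₗ[F] A) →ₗ[F] (A →ₗ[F] A) where
  toFun g := LinearMap.mul' F A ∘ₗ g.lTensor A ∘ₗ comul
  map_add' _ _ := by ext; simp [LinearMap.lTensor_add]
  map_smul' _ _ := by ext; simp [LinearMap.lTensor_smul]

lemma auxPhi_inj : Function.Injective (auxPhi F A) := by
  intro g h hgh
  have key : ∀ g : A →ₗ[F] A, WithConv.toConv (auxPhi F A g) =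
    WithConv.toConv LinearMap.id * WithConv.toConv g := fun g => rfl
  have h2 : WithConv.toConv (LinearMap.id (R := F) (M := A)) * WithConv.toConv g =
      WithConv.toConv LinearMap.id * WithConv.toConv h := by rw [← key, ← key, hgh]
  have h3 := congrArg (WithConv.toConv (HopfAlgebra.antipode F (A := A)) * ·) h2
  simp only [← mul_assoc, LinearMap.antipode_mul_id, one_mul] at h3
  exact WithConv.toConv_injective h3

variable [FiniteDimensional F A]

/-- `a ⊗ f ↦ (x ↦ (xa)₁ f((xa)₂))`. -/
noncomputable def auxTheta : A ⊗[F] Module.Dual F A →ₗ[F] (A →ₗ[F] A) :=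
  auxPhi F A ∘ₗ (dualTensorHomEquiv F A A).toLinearMap ∘ₗ
    (TensorProduct.comm F A (Module.Dual F A)).toLinearMap ∘ₗ auxPsi F A (auxRho F A)

lemma auxTheta_inj : Function.Injective (auxTheta F A) := by
  simp only [auxTheta, LinearMap.coe_comp, LinearEquiv.coe_coe]
  exact (auxPhi_inj F A).comp ((LinearEquiv.injective _).comp
    ((LinearEquiv.injective _).comp (auxPsi_inj F A)))

lemma auxTheta_apply (a : A) (f : Module.Dual F A) (x : A) :
    auxTheta F A (a ⊗ₜ f) x = TensorProduct.rid F A (f.lTensor A (comul (x * a))) := by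
  simp only [auxTheta, auxPsi, auxPhi, LinearMap.comp_apply, LinearMap.rTensor_tmul,
    LinearMap.coe_mk, AddHom.coe_mk, Bialgebra.comul_mul, LinearEquiv.coe_coe]
  generalize (comul (R := F) x) = t
  generalize (comul (R := F) a) = u
  induction u with
  | zero => simp
  | add x y hx hy =>
    simp only [add_tmul, map_add, mul_add, LinearMap.lTensor_add, LinearMap.add_apply, hx, hy]
  | tmul u v =>
    induction t with
    | zero => simp
    | add x y hx hy => simp only [map_add, add_mul, hx, hy]
    | tmul x y => simp [auxRho_apply]

lemma auxTheta_comm (e : A) :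
    auxTheta F A ∘ₗ (LinearMap.mulLeft F e).rTensor (Module.Dual F A) =
      LinearMap.lcomp F A (LinearMap.mulRight F e) ∘ₗ auxTheta F A := by
  ext a f x
  simp [auxTheta_apply, mul_assoc]

end aux

/-- Corollary A.15 of the paper. For an idempotent `e` in a
finite-dimensional Hopf algebra `A` over a field `F`, one has
`dim_F (Ae) = dim_F (eA)`, where `Ae` is the image of the `F`-linear map
`x ↦ x·e` and `eA` is the image of `x ↦ e·x`. -/
theorem stmt11 (F : Type*) [Field F] (A : Type*) [Ring A] [HopfAlgebra F A]
    [FiniteDimensional F A] (e : A) (he : e * e = e) :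
    Module.finrank F (LinearMap.range (LinearMap.mulRight F e)) =
      Module.finrank F (LinearMap.range (LinearMap.mulLeft F e)) := by
  have hinj := auxTheta_inj F A
  have hd : Module.finrank F (TensorProduct F A (Module.Dual F A)) =
      Module.finrank F (A →ₗ[F] A) := by
    rw [Module.finrank_tensorProduct, Subspace.dual_finrank_eq, Module.finrank_linearMap]
  have hsurj : LinearMap.range (auxTheta F A) = ⊤ := LinearMap.range_eq_top.2
    ((LinearMap.injective_iff_surjective_of_finrank_eq_finrank hd).1 hinj)
  have h := congrArg (fun T => Module.finrank F (LinearMap.range T)) (auxTheta_comm F A e)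
  rw [LinearMap.range_comp_of_range_eq_top _ hsurj, aux_rank_right, LinearMap.range_comp,
    ← (Submodule.equivMapOfInjective _ hinj _).finrank_eq, aux_rank_left, Subspace.dual_finrank_eq] at h
  rcases Nat.eq_zero_or_pos (Module.finrank F A) with h0 | h0
  · have := Submodule.finrank_le (LinearMap.range (LinearMap.mulRight F e))
    have := Submodule.finrank_le (LinearMap.range (LinearMap.mulLeft F e))
    omega
  · exact (Nat.eq_of_mul_eq_mul_right h0 h).symm
end

section
/- Let F be a field, let A be a Hopf algebra over F, and let V be a finite-dimensional (left) A-module. Equip A ⊗_F V with the A-module structure obtained by restricting the natural (A ⊗_F A)-module structure (where A acts on the first factor by left multiplication and acts on V via its given module structure) along the comultiplication Δ : A → A ⊗_F A, which is an F-algebra homomorphism. Then A ⊗_F V is isomorphic as an A-module to the direct sum A^{⊕ dim_F V} of dim_F V copies of the left regular A-module. -/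
/-- The `A`-module structure on `M ⊗[F] N`, for `A` a bialgebra over `F` and
`M`, `N` two `A`-modules: it is obtained by restricting the natural
`(A ⊗[F] A)`-module structure (acting factorwise) along the comultiplication
`Δ : A → A ⊗[F] A`, which is an `F`-algebra homomorphism. -/
noncomputable def tensorModuleComul (F A M N : Type*) [CommSemiring F] [Semiring A]
    [Bialgebra F A]
    [AddCommMonoid M] [Module F M] [Module A M] [IsScalarTower F A M]
    [AddCommMonoid N] [Module F N] [Module A N] [IsScalarTower F A N] :
    Module A (TensorProduct F M N) :=
  Module.compHom _
    ((((Module.endTensorEndAlgHom (R := F) (S := F) (A := F) (M := M) (N := N)).comp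
          (Algebra.TensorProduct.map (Algebra.lsmul F F M) (Algebra.lsmul F F N))).comp
        (Bialgebra.comulAlgHom F A)).toRingHom)

open TensorProduct Coalgebra in
noncomputable def tmcAct (F A V : Type*) [Field F] [Ring A] [HopfAlgebra F A]
    [AddCommGroup V] [Module F V] [Module A V] [IsScalarTower F A V] :
    A ⊗[F] A →ₐ[F] Module.End F (A ⊗[F] V) :=
  (Module.endTensorEndAlgHom (R := F) (S := F) (A := F) (M := A) (N := V)).comp
          (Algebra.TensorProduct.map (Algebra.lsmul F F A) (Algebra.lsmul F F V))

section TmcAux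
open TensorProduct Coalgebra
variable {F A V : Type*} [Field F] [Ring A] [HopfAlgebra F A]
    [AddCommGroup V] [Module F V] [Module A V] [IsScalarTower F A V]

theorem tmcAct_tmul (a b c : A) (v : V) :
    tmcAct F A V (a ⊗ₜ b) (c ⊗ₜ v) = (a * c) ⊗ₜ (b • v) := by
  simp only [tmcAct, AlgHom.comp_apply, Algebra.TensorProduct.map_tmul]
  rw [Module.endTensorEndAlgHom_apply]
  simp

variable (V) in
noncomputable def tmcT (f : A →ₗ[F] A) : A ⊗[F] V →ₗ[F] A ⊗[F] V :=
  TensorProduct.lift (LinearMap.mk₂ F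
    (fun a v => tmcAct F A V (f.lTensor A (comul (R := F) a)) ((1 : A) ⊗ₜ v))
    (by intros; simp) (by intros; simp)
    (by intros; simp [TensorProduct.tmul_add]) (by intros; simp))

theorem tmcT_tmul (f : A →ₗ[F] A) (a : A) (v : V) :
    tmcT V f (a ⊗ₜ v) = tmcAct F A V (f.lTensor A (comul (R := F) a)) ((1 : A) ⊗ₜ v) := by
  simp [tmcT]

theorem tmc_aux1 (f g : A →ₗ[F] A) (t : A ⊗[F] A) (y : A) :
    f.lTensor A t * (1 ⊗ₜ g y) =
      (LinearMap.mul' F A ∘ₗ TensorProduct.map f g).lTensor A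
        (TensorProduct.assoc F A A A (t ⊗ₜ y)) := by
  induction t with
  | zero => simp
  | tmul a b => simp
  | add x y hx hy => simp only [map_add, add_mul, hx, hy, TensorProduct.add_tmul]

theorem tmc_aux2 (f g : A →ₗ[F] A) (t : A ⊗[F] A) (v : V) :
    tmcT V f (tmcAct F A V (g.lTensor A t) ((1 : A) ⊗ₜ v)) =
      tmcAct F A V ((LinearMap.mul' F A ∘ₗ TensorProduct.map f g).lTensor A
        (TensorProduct.assoc F A A A ((comul (R := F) (A := A)).rTensor A t)))
        ((1 : A) ⊗ₜ v) := by
  induction t with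
  | zero => simp
  | tmul a b =>
    rw [LinearMap.rTensor_tmul, ← tmc_aux1, map_mul, LinearMap.lTensor_tmul, tmcAct_tmul,
      Module.End.mul_apply, tmcAct_tmul, mul_one, mul_one, tmcT_tmul]
  | add x y hx hy => simp only [map_add, LinearMap.add_apply, hx, hy]

theorem tmcT_comp (f g : A →ₗ[F] A)
    (h : LinearMap.mul' F A ∘ₗ TensorProduct.map f g ∘ₗ comul =
      Algebra.linearMap F A ∘ₗ counit) :
    tmcT V f ∘ₗ tmcT V g = LinearMap.id := by
  apply TensorProduct.ext'
  intro a v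
  rw [LinearMap.comp_apply, tmcT_tmul, tmc_aux2, Coalgebra.coassoc_apply,
    ← LinearMap.lTensor_comp_apply, LinearMap.comp_assoc, h, LinearMap.lTensor_comp_apply,
    Coalgebra.lTensor_counit_comul]
  simp [tmcAct_tmul]

theorem tmcT_smul (b : A) (x : A ⊗[F] V) :
    tmcT V LinearMap.id (b • x) = tmcAct F A V (comul (R := F) b) (tmcT V LinearMap.id x) := by
  induction x with
  | zero => simp
  | tmul a v =>
    rw [TensorProduct.smul_tmul', tmcT_tmul, tmcT_tmul]
    simp
  | add x y hx hy => simp only [smul_add, map_add, hx, hy]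

theorem tmc_nonempty {A : Type*} [Ring A] {M N : Type*} [AddCommMonoid M] [AddCommMonoid N]
    [Module A M] [Module A N] (e : M ≃+ N) (h : ∀ (b : A) (x : M), e (b • x) = b • e x) :
    Nonempty (M ≃ₗ[A] N) :=
  ⟨e.toLinearEquiv h⟩

end TmcAux

/-- Lemma 2.6(ii) of the paper. For a Hopf algebra `A` over a
field `F` and a finite-dimensional `A`-module `V`, the tensor product
`A ⊗[F] V` (with `A` acting via the comultiplication, on the left factor by
left multiplication and on `V` by its module structure) is isomorphic as an
`A`-module to `A^{⊕ dim_F V}`. -/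
theorem stmt12 (F : Type*) [Field F] (A : Type*) [Ring A] [HopfAlgebra F A]
    (V : Type*) [AddCommGroup V] [Module F V] [Module A V] [IsScalarTower F A V]
    [FiniteDimensional F V] :
    letI : Module A (TensorProduct F A V) := tensorModuleComul F A A V
    Nonempty ((TensorProduct F A V) ≃ₗ[A] (Fin (Module.finrank F V) → A)) := by
  have h1 : tmcT V (F := F) (A := A) LinearMap.id ∘ₗ tmcT V (HopfAlgebra.antipode F)
      = LinearMap.id := tmcT_comp _ _ HopfAlgebra.mul_antipode_lTensor_comul
  have h2 : tmcT V (F := F) (A := A) (HopfAlgebra.antipode F) ∘ₗ tmcT V LinearMap.id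
      = LinearMap.id := tmcT_comp _ _ HopfAlgebra.mul_antipode_rTensor_comul
  let e : TensorProduct F A V ≃ₗ[F] TensorProduct F A V := LinearEquiv.ofLinearMap _ _ h1 h2
  let c : TensorProduct F A V ≃ₗ[A] (Fin (Module.finrank F V) → A) :=
    (Algebra.TensorProduct.basis A (Module.finBasis F V)).equivFun
  have he : ∀ (b : A) (x : TensorProduct F A V),
      e.symm (tmcAct F A V (Coalgebra.comul (R := F) b) x) = b • e.symm x := by
    intro b x
    rw [LinearEquiv.symm_apply_eq]
    refine Eq.trans ?_ (tmcT_smul b (e.symm x)).symm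
    exact congrArg _ (e.apply_symm_apply x).symm
  exact @tmc_nonempty A _ (TensorProduct F A V) (Fin (Module.finrank F V) → A) _ _
    (tensorModuleComul F A A V) _ (e.symm.toAddEquiv.trans c.toAddEquiv)
    (fun b x => (congrArg c (he b x)).trans (c.map_smul b _))
end

section
/- Let F be an algebraically closed field of prime characteristic p, let G be a finite group, and write |G| = p^a·q with p not dividing q (so p^a is the order of a p-Sylow subgroup of G). Then: (1) p^a divides dim_F P for every finite-dimensional projective module P over the group algebra FG; and (2) for any natural number n, if n divides dim_F P for every nonzero finite-dimensional projective FG-module P, then n divides p^a. Equivalently, the greatest common divisor of the F-dimensions of the nonzero finite-dimensional projective FG-modules equals p^a. -/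
theorem lemA {F : Type} [Field F] (p : ℕ) [Fact p.Prime] [CharP F p] {S : Type} [Group S] [Finite S]
    (hS : IsPGroup p S) {V : Type} [AddCommGroup V] [Module F V] (ρ : Representation F S V)
    (W : Submodule F V) (hW : ∀ s, ∀ v ∈ W, ρ s v ∈ W) (h : W ≠ ⊥) :
    ∃ v ∈ W, v ≠ 0 ∧ ∀ s, ρ s v = v := by
  obtain ⟨v, hv, hv0⟩ := W.exists_mem_ne_zero_of_ne_bot h
  let _ : Algebra (ZMod p) F := ZMod.algebra F p
  let _ : Module (ZMod p) V := Module.compHom V (algebraMap (ZMod p) F)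
  have _ : IsScalarTower (ZMod p) F V := IsScalarTower.of_algebraMap_smul (fun r x => rfl)
  let A : Submodule (ZMod p) V := Submodule.span (ZMod p) (Set.range fun s => ρ s v)
  have hAW : A ≤ W.restrictScalars (ZMod p) := by
    refine Submodule.span_le.2 ?_
    rintro _ ⟨s, rfl⟩
    exact hW s v hv
  have hAinv : ∀ s, ∀ x ∈ A, ρ s x ∈ A := by
    intro s x hx
    have : A ≤ A.comap ((ρ s).restrictScalars (ZMod p)) := by
      refine Submodule.span_le.2 ?_
      rintro _ ⟨t, rfl⟩
      refine Submodule.subset_span ⟨s * t, ?_⟩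
      simp
    exact this hx
  have hvA : v ∈ A := Submodule.subset_span ⟨1, by simp⟩
  have _ : Module.Finite (ZMod p) A := Module.Finite.span_of_finite (ZMod p) (Set.finite_range _)
  have _ : Finite A := Module.finite_of_finite (ZMod p)
  let _ : MulAction S A :=
    { smul := fun s x => ⟨ρ s x, hAinv s x x.2⟩
      one_smul := fun x => Subtype.ext (show ρ 1 (x : V) = x by simp)
      mul_smul := fun s t x => Subtype.ext (show ρ (s * t) (x : V) = ρ s (ρ t x) by simp) }
  have _ : Nontrivial A := ⟨⟨v, hvA⟩, 0, fun e => hv0 (congrArg Subtype.val e)⟩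
  have hcard : p ∣ Nat.card A := by
    rw [Module.natCard_eq_pow_finrank (K := ZMod p) (V := A), Nat.card_zmod]
    exact dvd_pow_self _ (Module.finrank_pos).ne'
  obtain ⟨b, hb, hne⟩ := hS.exists_fixed_point_of_prime_dvd_card_of_fixed_point A hcard
    (a := 0) (fun s => Subtype.ext (show ρ s (0 : V) = 0 by simp))
  refine ⟨b, hAW b.2, fun e => hne (Subtype.ext e.symm), fun s => congrArg Subtype.val (hb s)⟩

theorem lemB {F : Type} [Field F] (p : ℕ) [Fact p.Prime] [CharP F p] {S : Type} [Group S] [Fintype S]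
    (hS : IsPGroup p S) {V : Type} [AddCommGroup V] [Module F V] [FiniteDimensional F V]
    (ρ : Representation F S V) :
    Fintype.card S * Module.finrank F (LinearMap.range (∑ s, ρ s)) ≤ Module.finrank F V := by
  set N := ∑ s, ρ s with hN
  obtain ⟨j, hj⟩ := N.rangeRestrict.exists_rightInverse_of_surjective N.range_rangeRestrict
  have hj' : ∀ u, N (j u) = u := fun u => congrArg Subtype.val (LinearMap.congr_fun hj u)
  have hNa : ∀ v, N v = ∑ s, ρ s v := fun v => by simp [hN]
  let Φ : (S → LinearMap.range N) →ₗ[F] V :=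
    ∑ s, (ρ s) ∘ₗ j ∘ₗ LinearMap.proj s
  have hΦ : ∀ c, Φ c = ∑ s, ρ s (j (c s)) := fun c => by simp [Φ]
  let σ : Representation F S (S → LinearMap.range N) :=
    { toFun := fun t => LinearMap.funLeft F _ (fun s => t⁻¹ * s)
      map_one' := by ext; simp [LinearMap.funLeft]
      map_mul' := fun a b => by
        apply LinearMap.ext; intro c; funext s
        simp [LinearMap.funLeft, mul_assoc] }
  have hσ : ∀ t c s, σ t c s = c (t⁻¹ * s) := fun _ _ _ => rfl
  have hker : LinearMap.ker Φ = ⊥ := by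
    by_contra hne
    obtain ⟨c, hc, hc0, hfix⟩ := lemA p hS σ (LinearMap.ker Φ) (by
      intro t c hc
      rw [LinearMap.mem_ker, hΦ] at *
      have : ∑ s, ρ s (j (σ t c s)) = ρ t (∑ s, ρ s (j (c s))) := by
        rw [map_sum, ← Equiv.sum_comp (Equiv.mulLeft t)]
        simp [hσ]
      rw [this, hc, map_zero]) hne
    have hconst : ∀ s, c s = c 1 := fun s => by
      have := congrFun (hfix s) s
      rw [hσ] at this
      simpa using this.symm
    rw [LinearMap.mem_ker, hΦ] at hc
    simp_rw [hconst] at hc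
    have h1 : N (j (c 1)) = 0 := by rw [hNa]; exact hc
    rw [hj'] at h1
    apply hc0
    funext s
    rw [hconst]
    exact Subtype.ext h1
  have := LinearMap.finrank_le_finrank_of_injective (LinearMap.ker_eq_bot.1 hker)
  rwa [Module.finrank_pi_fintype, Finset.sum_const, Finset.card_univ, smul_eq_mul] at this

/-- The norm element of a subgroup in the group algebra. -/
noncomputable def nuElt (F : Type) [Field F] {G : Type} [Group G] (S : Subgroup G) [Fintype S] :
    MonoidAlgebra F G := ∑ s : S, MonoidAlgebra.single (s : G) (1 : F)

/-- Action of the norm element. -/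
noncomputable def nuMap (F : Type) [Field F] {G : Type} [Group G] (S : Subgroup G) [Fintype S]
    (V : Type) [AddCommGroup V] [Module (MonoidAlgebra F G) V] [Module F V]
    [IsScalarTower F (MonoidAlgebra F G) V] : V →ₗ[F] V := Algebra.lsmul F F V (nuElt F S)

theorem nuMap_apply (F : Type) [Field F] {G : Type} [Group G] (S : Subgroup G) [Fintype S]
    (V : Type) [AddCommGroup V] [Module (MonoidAlgebra F G) V] [Module F V]
    [IsScalarTower F (MonoidAlgebra F G) V] (v : V) : nuMap F S V v = nuElt F S • v := rfl

theorem lemC {F : Type} [Field F] (p : ℕ) [Fact p.Prime] [CharP F p] {G : Type} [Group G]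
    (S : Subgroup G) [Fintype S] (hS : IsPGroup p S)
    (V : Type) [AddCommGroup V] [Module (MonoidAlgebra F G) V] [Module F V]
    [IsScalarTower F (MonoidAlgebra F G) V] [FiniteDimensional F V] :
    Fintype.card S * Module.finrank F (LinearMap.range (nuMap F S V)) ≤ Module.finrank F V := by
  have h := lemB p hS
    ((Representation.ofModule' (k := F) (G := G) V).comp S.subtype : Representation F S V)
  have e : nuMap F S V = ∑ s : S,
    ((Representation.ofModule' (k := F) (G := G) V).comp S.subtype : Representation F S V) s := by
    ext v
    simp [nuMap_apply, nuElt, Finset.sum_smul, Representation.ofModule']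
  rwa [e]

theorem lemD (F : Type) [Field F] {G : Type} [Group G] [Fintype G]
    (S : Subgroup G) [Fintype S] (n : ℕ) :
    n * S.index ≤ Module.finrank F (LinearMap.range (nuMap F S (Fin n → MonoidAlgebra F G))) := by
  classical
  let _ : Fintype (G ⧸ S) := Fintype.ofFinite _
  let φ : (Fin n → (G ⧸ S) → F) →ₗ[F] (Fin n → MonoidAlgebra F G) :=
    LinearMap.pi fun i => ∑ k : G ⧸ S,
      (MonoidAlgebra.lsingle (k.out)⁻¹) ∘ₗ LinearMap.proj k ∘ₗ LinearMap.proj i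
  have hφ : ∀ c i, φ c i = ∑ k : G ⧸ S, MonoidAlgebra.single (k.out)⁻¹ (c i k) := fun c i => by
    simp [φ]
  let ψ := nuMap F S (Fin n → MonoidAlgebra F G) ∘ₗ φ
  have hcoef : ∀ c i (k0 : G ⧸ S), (ψ c i).coeff (k0.out)⁻¹ = c i k0 := by
    intro c i k0
    have : ψ c i = ∑ s : S, ∑ k : G ⧸ S, MonoidAlgebra.single ((s : G) * (k.out)⁻¹) (c i k) := by
      change (nuElt F S • φ c) i = _
      rw [Pi.smul_apply, hφ, nuElt, smul_eq_mul, Finset.sum_mul_sum]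
      simp [MonoidAlgebra.single_mul_single]
    rw [this]
    have key : ∀ (s : S) (k : G ⧸ S), (s : G) * (k.out)⁻¹ = (k0.out)⁻¹ → k = k0 ∧ s = 1 := by
      intro s k h
      have hk : k = k0 := by
        rw [← k.out_eq', ← k0.out_eq']
        symm
        refine QuotientGroup.eq.2 ?_
        rw [← h]; simp
      subst hk
      refine ⟨rfl, ?_⟩
      simpa using h
    simp only [MonoidAlgebra.coeff_sum, Finsupp.finsetSum_apply, MonoidAlgebra.coeff_single]
    rw [Finset.sum_eq_single 1, Finset.sum_eq_single k0]
    · simp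
    · intro k _ hk
      rw [Finsupp.single_apply, if_neg]
      exact fun h => hk (key _ _ h).1
    · simp
    · intro s _ hs
      refine Finset.sum_eq_zero fun k _ => ?_
      rw [Finsupp.single_apply, if_neg]
      exact fun h => hs (key _ _ h).2
    · simp
  have hinj : Function.Injective ψ := by
    intro c d h
    funext i k
    rw [← hcoef c, ← hcoef d, h]
  have h1 := (LinearMap.finrank_range_of_inj hinj).symm.le.trans
    (Submodule.finrank_mono (LinearMap.range_comp_le_range φ
      (nuMap F S (Fin n → MonoidAlgebra F G))))
  simpa [Module.finrank_pi_fintype, Subgroup.index, Nat.card_eq_fintype_card] using h1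

theorem finrankMA (F G : Type) [Field F] [Fintype G] :
    Module.finrank F (MonoidAlgebra F G) = Fintype.card G := by
  rw [(MonoidAlgebra.coeffLinearEquiv F).finrank_eq]; simp

theorem part1 {F : Type} [Field F] (p : ℕ) [Fact p.Prime] [CharP F p] {G : Type} [Group G]
    [Fintype G] (S : Subgroup G) [Fintype S] (hS : IsPGroup p S)
    (V : Type) [AddCommGroup V] [Module (MonoidAlgebra F G) V] [Module F V]
    [IsScalarTower F (MonoidAlgebra F G) V] [FiniteDimensional F V]
    [Module.Projective (MonoidAlgebra F G) V] : Fintype.card S ∣ Module.finrank F V := by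
  have _ : Module.Finite (MonoidAlgebra F G) V := Module.Finite.of_restrictScalars_finite F _ _
  obtain ⟨n, f, hf⟩ := Module.Finite.exists_fin' (MonoidAlgebra F G) V
  obtain ⟨s, hs⟩ := Module.projective_lifting_property f LinearMap.id hf
  have hs' : ∀ v, f (s v) = v := fun v => LinearMap.congr_fun hs v
  let X := Fin n → MonoidAlgebra F G
  let K := LinearMap.ker f
  have _ : FiniteDimensional F K :=
    Module.Finite.of_injective (K.subtype.restrictScalars F) Subtype.val_injective
  have hdim : Module.finrank F V + Module.finrank F K ≤ n * Fintype.card G := by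
    have h := LinearMap.finrank_le_finrank_of_injective
      (f := (s.restrictScalars F).coprod (K.subtype.restrictScalars F)) (by
        rw [← LinearMap.ker_eq_bot, LinearMap.ker_eq_bot']
        rintro ⟨v, k⟩ h
        simp only [LinearMap.coprod_apply, LinearMap.restrictScalars_apply,
          Submodule.subtype_apply] at h
        have h1 := congrArg f h
        rw [map_add, hs', LinearMap.mem_ker.1 k.2, map_zero, add_zero] at h1
        subst h1
        simp at h
        simp [h])
    simpa [Module.finrank_prod, Module.finrank_pi_fintype, finrankMA] using h
  have hrank : Module.finrank F (LinearMap.range (nuMap F S X)) ≤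
      Module.finrank F (LinearMap.range (nuMap F S V)) +
      Module.finrank F (LinearMap.range (nuMap F S K)) := by
    have hle : LinearMap.range (nuMap F S X) ≤
        (LinearMap.range (nuMap F S V)).map (s.restrictScalars F) ⊔
        (LinearMap.range (nuMap F S K)).map (K.subtype.restrictScalars F) := by
      rintro _ ⟨x, rfl⟩
      have hk : x - s (f x) ∈ K := by
        rw [LinearMap.mem_ker, map_sub, hs', sub_self]
      refine Submodule.mem_sup.2 ⟨_, ⟨_, ⟨f x, rfl⟩, rfl⟩, _, ⟨_, ⟨⟨_, hk⟩, rfl⟩, rfl⟩, ?_⟩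
      simp only [nuMap_apply, LinearMap.restrictScalars_apply, map_smul, Submodule.subtype_apply]
      rw [← smul_add]; simp
    exact (Submodule.finrank_mono hle).trans
      ((Submodule.finrank_add_le_finrank_add_finrank _ _).trans
        (add_le_add (Submodule.finrank_map_le _ _) (Submodule.finrank_map_le _ _)))
  have hD := lemD F S n
  have hV := lemC (F := F) p S hS V
  have hK := lemC (F := F) p S hS K
  have hi : Fintype.card S * S.index = Fintype.card G := by
    rw [← Nat.card_eq_fintype_card, ← Nat.card_eq_fintype_card, S.card_mul_index]
  have h2 := Nat.mul_le_mul_left (Fintype.card S) (hD.trans hrank)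
  rw [mul_left_comm, hi, mul_add] at h2
  refine ⟨Module.finrank F (LinearMap.range (nuMap F S V)), ?_⟩
  omega

theorem part2 (F : Type) [Field F] {G : Type} [Group G] [Fintype G] (L : Subgroup G)
    (hL : (Nat.card L : F) ≠ 0) :
    Module.Projective (MonoidAlgebra F G) (Representation.ofMulAction F G (G ⧸ L)).asModule := by
  classical
  let _ : Fintype (G ⧸ L) := Fintype.ofFinite _
  set ρ := Representation.ofMulAction F G (G ⧸ L) with hρ
  let i0 : ρ.asModule →ₗ[F] MonoidAlgebra F G :=
    { toFun := fun f => ∑ g : G, MonoidAlgebra.single g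
        ((Nat.card L : F)⁻¹ * (ρ.asModuleEquiv f).coeff (g : G ⧸ L))
      map_add' := fun a b => by
        simp [mul_add, MonoidAlgebra.single_add, Finset.sum_add_distrib]
      map_smul' := fun r a => by
        simp [Finset.smul_sum, mul_left_comm] }
  have hi0 : ∀ f, i0 f = ∑ g : G, MonoidAlgebra.single g
        ((Nat.card L : F)⁻¹ * (ρ.asModuleEquiv f).coeff (g : G ⧸ L)) := fun _ => rfl
  let i : ρ.asModule →ₗ[MonoidAlgebra F G] MonoidAlgebra F G :=
    MonoidAlgebra.equivariantOfLinearOfComm i0 (by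
      intro g v
      rw [hi0, hi0, smul_eq_mul, Finset.mul_sum, ← Equiv.sum_comp (Equiv.mulLeft g)]
      refine Finset.sum_congr rfl fun x _ => ?_
      rw [MonoidAlgebra.single_mul_single, Representation.asModuleEquiv_map_smul,
        Representation.asAlgebraHom_single, one_smul, hρ, Representation.coeff_ofMulAction, one_mul]
      have : g⁻¹ • ((Equiv.mulLeft g x : G) : G ⧸ L) = (x : G ⧸ L) := by
        change (((g⁻¹ * (g * x) : G)) : G ⧸ L) = _
        rw [inv_mul_cancel_left]
      rw [this]; rfl)
  let s : MonoidAlgebra F G →ₗ[MonoidAlgebra F G] ρ.asModule :=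
    LinearMap.toSpanSingleton _ _
      (ρ.asModuleEquiv.symm (MonoidAlgebra.single ((1 : G) : G ⧸ L) 1))
  refine Module.Projective.of_split i s ?_
  ext f
  apply ρ.asModuleEquiv.injective
  change ρ.asModuleEquiv (i0 f • _) = ρ.asModuleEquiv f
  rw [hi0, Finset.sum_smul, map_sum]
  have h1 : ∀ (g : G) (r : F), ρ.asModuleEquiv ((MonoidAlgebra.single g r : MonoidAlgebra F G) •
      (ρ.asModuleEquiv.symm (MonoidAlgebra.single ((1 : G) : G ⧸ L) 1))) =
      MonoidAlgebra.single (g : G ⧸ L) r := by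
    intro g r
    rw [Representation.asModuleEquiv_map_smul, Representation.asAlgebraHom_single,
      LinearEquiv.apply_symm_apply, LinearMap.smul_apply, hρ, Representation.ofMulAction_single,
      MonoidAlgebra.smul_single, smul_eq_mul, mul_one]
    change MonoidAlgebra.single ((g * 1 : G) : G ⧸ L) r = _
    rw [mul_one]
  simp_rw [h1]
  let e : G ≃ (G ⧸ L) × L := Subgroup.groupEquivQuotientProdSubgroup
  have he : ∀ x, ((e.symm x : G) : G ⧸ L) = x.1 := by
    intro x
    obtain ⟨g, rfl⟩ := e.surjective x
    rw [e.symm_apply_apply]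
    rfl
  let _ : Fintype L := Fintype.ofFinite _
  rw [← Equiv.sum_comp e.symm]
  simp_rw [he]
  rw [Fintype.sum_prod_type]
  simp only [Finset.sum_const, Finset.card_univ]
  generalize ρ.asModuleEquiv f = y
  have h2 : ∀ x : G ⧸ L, Fintype.card L • MonoidAlgebra.single x ((Nat.card L : F)⁻¹ * y.coeff x)
      = MonoidAlgebra.single x (y.coeff x) := by
    intro x
    rw [MonoidAlgebra.smul_single, nsmul_eq_mul, ← Nat.card_eq_fintype_card,
      mul_inv_cancel_left₀ hL]
  rw [Finset.sum_congr rfl fun x _ => h2 x]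
  ext x
  simp [MonoidAlgebra.coeff_sum, Finsupp.finsetSum_apply, Finsupp.single_apply]

/-- Dickson's theorem, cf. Proposition 5.4 of the paper.
Let `F` be an algebraically closed field of prime characteristic `p`, let `G`
be a finite group with `|G| = p^a · q` and `p ∤ q`. Then `p^a` divides the
`F`-dimension of every finite-dimensional projective `FG`-module, and any `n`
dividing the dimensions of all nonzero finite-dimensional projective
`FG`-modules divides `p^a`; i.e. the gcd of these dimensions is `p^a`. -/
theorem stmt14 (F : Type) [Field F] [IsAlgClosed F] (p : ℕ) [Fact p.Prime] [CharP F p]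
    (G : Type) [Group G] [Fintype G] (a q : ℕ) (hq : ¬ p ∣ q)
    (hcard : Fintype.card G = p ^ a * q) :
    (∀ (P : Type) [AddCommGroup P] [Module (MonoidAlgebra F G) P] [Module F P]
        [IsScalarTower F (MonoidAlgebra F G) P] [FiniteDimensional F P],
        Module.Projective (MonoidAlgebra F G) P → p ^ a ∣ Module.finrank F P) ∧
    (∀ n : ℕ,
        (∀ (P : Type) [AddCommGroup P] [Module (MonoidAlgebra F G) P] [Module F P]
          [IsScalarTower F (MonoidAlgebra F G) P] [FiniteDimensional F P],
          Module.Projective (MonoidAlgebra F G) P → Nontrivial P →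
            n ∣ Module.finrank F P) →
        n ∣ p ^ a) := by
  have hp : p.Prime := Fact.out
  have hcard' : Nat.card G = p ^ a * q := by rw [Nat.card_eq_fintype_card, hcard]
  refine ⟨?_, ?_⟩
  · intro P _ _ _ _ _ hP
    obtain ⟨S, hS⟩ := Sylow.exists_subgroup_card_pow_prime (G := G) p (n := a)
      (by rw [hcard']; exact dvd_mul_right _ _)
    let _ : Fintype S := Fintype.ofFinite _
    have h := part1 (F := F) p S (IsPGroup.of_card hS) P
    rwa [← Nat.card_eq_fintype_card, hS] at h
  · intro n hn
    have h0 : n ∣ p ^ a * q := by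
      have _ : FiniteDimensional F (MonoidAlgebra F G) :=
        Module.Finite.equiv (MonoidAlgebra.coeffLinearEquiv F).symm
      have := hn (MonoidAlgebra F G) inferInstance inferInstance
      rwa [finrankMA, hcard] at this
    refine Nat.Coprime.dvd_of_dvd_mul_right ?_ h0
    refine Nat.Coprime.symm (Nat.Coprime.symm (Nat.coprime_of_dvd ?_))
    intro l hl hln hlq
    have _ : Fact l.Prime := ⟨hl⟩
    have hlp : l ≠ p := fun h => hq (h ▸ hlq)
    obtain ⟨L⟩ : Nonempty (Sylow l G) := inferInstance
    have hL : (Nat.card (L : Subgroup G) : F) ≠ 0 := by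
      obtain ⟨m, hm⟩ := IsPGroup.iff_card.1 L.isPGroup'
      rw [hm, Ne, CharP.cast_eq_zero_iff F p]
      intro h
      exact hlp ((Nat.prime_dvd_prime_iff_eq hp hl).1 (hp.dvd_of_dvd_pow h)).symm
    have hproj := part2 F (L : Subgroup G) hL
    let _ : Fintype (G ⧸ (L : Subgroup G)) := Fintype.ofFinite _
    have _ : FiniteDimensional F (MonoidAlgebra F (G ⧸ (L : Subgroup G))) :=
      Module.Finite.equiv (MonoidAlgebra.coeffLinearEquiv F).symm
    have hnt : Nontrivial (MonoidAlgebra F (G ⧸ (L : Subgroup G))) := inferInstance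
    have h := hn _ hproj hnt
    rw [(Representation.asModuleEquiv _).finrank_eq, finrankMA, ← Nat.card_eq_fintype_card] at h
    exact L.not_dvd_index (hln.trans h)
end

section
/- Let F be an algebraically closed field of prime characteristic p, let G be a finite group, and let V be a finite-dimensional representation of G over F (equivalently, a finite-dimensional FG-module). Then V is tensor-rich if and only if the only p-regular element g ∈ G that acts as the identity on V is the identity element e of G; that is, if and only if for every g ∈ G whose order is not divisible by p and which satisfies g·v = v for all v ∈ V, one has g = e. -/
open CategoryTheory MonoidalCategory

/-- The `n`-th tensor power of a representation `X` of `G` over `k`, with the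
diagonal `G`-action; `X^{⊗0}` is the trivial one-dimensional representation
(the monoidal unit of `Rep k G`). -/
noncomputable def repTensorPow (k G : Type) [CommRing k] [Monoid G] (X : Rep k G) :
    ℕ → Rep k G
  | 0 => 𝟙_ (Rep k G)
  | n + 1 => repTensorPow k G X n ⊗ X

/-- `S` is a composition factor of the `R`-module `W`: there are submodules
`N ⊆ M ⊆ W` with `M/N ≅ S`. -/
def IsCompositionFactor (R : Type*) [Ring R] (S : Type*) [AddCommGroup S] [Module R S]
    (W : Type*) [AddCommGroup W] [Module R W] : Prop :=
  ∃ N M : Submodule R W, N ≤ M ∧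
    Nonempty ((↥M ⧸ Submodule.comap M.subtype N) ≃ₗ[R] S)

/-- A representation `X ∈ Rep k G` is *tensor-rich* if every simple module over
the group algebra `k[G]` is a composition factor of some tensor power
`X^{⊗n}`. -/
def TensorRich (k G : Type) [CommRing k] [Monoid G] (X : Rep k G) : Prop :=
  ∀ (S : Type) [AddCommGroup S] [Module (MonoidAlgebra k G) S],
    IsSimpleModule (MonoidAlgebra k G) S →
      ∃ n : ℕ,
        IsCompositionFactor (MonoidAlgebra k G) S ((repTensorPow k G X n).ρ.asModule)


section helpers

variable {R : Type*} [Ring R]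

theorem isCompositionFactor_of_surj {S W : Type*} [AddCommGroup S] [Module R S]
    [AddCommGroup W] [Module R W] (M : Submodule R W) (f : M →ₗ[R] S)
    (hf : Function.Surjective f) : IsCompositionFactor R S W := by
  refine ⟨(LinearMap.ker f).map M.subtype, M, Submodule.map_subtype_le _ _, ⟨?_⟩⟩
  refine (Submodule.quotEquivOfEq _ _ ?_).trans (LinearMap.quotKerEquivOfSurjective f hf)
  exact Submodule.comap_map_eq_of_injective M.injective_subtype _

theorem IsCompositionFactor.exists_surj {S W : Type*} [AddCommGroup S] [Module R S]
    [AddCommGroup W] [Module R W] (h : IsCompositionFactor R S W) :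
    ∃ (M : Submodule R W) (f : M →ₗ[R] S), Function.Surjective f := by
  obtain ⟨N, M, -, ⟨e⟩⟩ := h
  exact ⟨M, e.toLinearMap ∘ₗ Submodule.mkQ _,
    e.surjective.comp (Submodule.mkQ_surjective _)⟩

theorem simple_equiv_of_annihilator_le [IsArtinian R R] {S T : Type*}
    [AddCommGroup S] [Module R S] [AddCommGroup T] [Module R T] [IsSimpleModule R S]
    [IsSimpleModule R T] (h : ∀ a : R, (∀ t : T, a • t = 0) → ∀ s : S, a • s = 0) :
    Nonempty (T ≃ₗ[R] S) := by
  classical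
  obtain ⟨F, hF⟩ := Finset.exists_inf_le
    (fun t : T => LinearMap.ker (LinearMap.toSpanSingleton R T t))
  let φ : R →ₗ[R] (F → T) := LinearMap.pi fun t => LinearMap.toSpanSingleton R T t.1
  have := IsSimpleModule.nontrivial R S
  obtain ⟨s0, hs0⟩ := exists_ne (0 : S)
  let ψ : R →ₗ[R] S := LinearMap.toSpanSingleton R S s0
  have hψ : Function.Surjective ψ := by
    rw [← LinearMap.range_eq_top]
    refine (eq_bot_or_eq_top _).resolve_left fun hb => hs0 ?_
    have : ψ 1 ∈ LinearMap.range ψ := ⟨1, rfl⟩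
    rw [hb] at this
    simpa [ψ] using this
  have hk : LinearMap.ker φ ≤ LinearMap.ker ψ := by
    intro a ha
    have ha' : ∀ t ∈ F, a • t = 0 := fun t ht => congrFun (LinearMap.mem_ker.1 ha) ⟨t, ht⟩
    refine h a (fun t => ?_) s0
    refine hF t (Submodule.mem_finsetInf.2 fun t ht => ?_)
    exact ha' t ht
  let χ : LinearMap.range φ →ₗ[R] S :=
    (Submodule.liftQ _ ψ hk) ∘ₗ φ.quotKerEquivRange.symm.toLinearMap
  have hχ : Function.Surjective χ := by
    intro s
    obtain ⟨a, rfl⟩ := hψ s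
    refine ⟨φ.quotKerEquivRange (Submodule.Quotient.mk a), ?_⟩
    simp [χ, -LinearMap.quotKerEquivRange_apply_mk]
  obtain ⟨σ, hσ⟩ := IsSemisimpleModule.lifting_property χ hχ (LinearMap.id)
  have hinj : Function.Injective σ := by
    intro x y hxy
    have := congrArg χ hxy
    rw [← LinearMap.comp_apply, ← LinearMap.comp_apply, hσ] at this
    exact this
  have hne : ((σ s0 : LinearMap.range φ) : F → T) ≠ 0 := by
    intro h0
    apply hs0
    apply hinj
    rw [map_zero]
    exact Subtype.ext h0
  obtain ⟨i, hi⟩ := Function.ne_iff.1 hne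
  let θ : S →ₗ[R] T := LinearMap.proj i ∘ₗ (LinearMap.range φ).subtype ∘ₗ σ
  have hθ : θ ≠ 0 := fun h0 => hi (by have := LinearMap.congr_fun h0 s0; simpa [θ] using this)
  exact ⟨(LinearEquiv.ofBijective θ (LinearMap.bijective_of_ne_zero hθ)).symm⟩

theorem simple_exists_smul {S : Type*} [AddCommGroup S] [Module R S] [IsSimpleModule R S]
    {s : S} (hs : s ≠ 0) (t : S) : ∃ c : R, c • s = t := by
  have : LinearMap.range (LinearMap.toSpanSingleton R S s) = ⊤ := by
    refine (eq_bot_or_eq_top _).resolve_left fun hb => hs ?_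
    have : s ∈ LinearMap.range (LinearMap.toSpanSingleton R S s) := ⟨1, by simp⟩
    rw [hb] at this
    simpa using this
  have h2 : t ∈ LinearMap.range (LinearMap.toSpanSingleton R S s) := this ▸ Submodule.mem_top
  exact h2

theorem isCompositionFactor_of_annihilator_le [IsArtinian R R] {S : Type*}
    [AddCommGroup S] [Module R S] [IsSimpleModule R S] {W : Type*} [AddCommGroup W] [Module R W]
    (hW : IsFiniteLength R W)
    (h : ∀ a : R, (∀ t : W, a • t = 0) → ∀ s : S, a • s = 0) :
    IsCompositionFactor R S W := by
  induction hW with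
  | of_subsingleton =>
    exfalso
    have := IsSimpleModule.nontrivial R S
    obtain ⟨s0, hs0⟩ := exists_ne (0 : S)
    exact hs0 (by simpa using h 1 (fun t => Subsingleton.elim _ _) s0)
  | @of_simple_quotient M _ _ N _ hN ih =>
    by_cases hq : ∀ a : R, (∀ t : M ⧸ N, a • t = 0) → ∀ s : S, a • s = 0
    · obtain ⟨e⟩ := simple_equiv_of_annihilator_le hq
      refine isCompositionFactor_of_surj ⊤ (e.toLinearMap ∘ₗ N.mkQ ∘ₗ Submodule.subtype _) ?_
      refine e.surjective.comp (N.mkQ_surjective.comp ?_)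
      exact fun x => ⟨⟨x, trivial⟩, rfl⟩
    · push Not at hq
      obtain ⟨b, hb, s, hs⟩ := hq
      have hn : IsCompositionFactor R S N := by
        apply ih
        intro a ha x
        obtain ⟨c, rfl⟩ := simple_exists_smul (R := R) hs x
        rw [← mul_smul, ← mul_smul]
        refine h _ (fun t => ?_) s
        have h1 : (c * b) • t ∈ N := by
          rw [mul_smul]
          refine N.smul_mem _ ?_
          have := hb (N.mkQ t)
          rw [← map_smul] at this
          exact (Submodule.Quotient.mk_eq_zero N).1 this
        have := congrArg Subtype.val (ha ⟨_, h1⟩)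
        simpa [mul_smul] using this
      obtain ⟨M1, f, hf⟩ := hn.exists_surj
      let e := Submodule.equivMapOfInjective N.subtype N.injective_subtype M1
      exact isCompositionFactor_of_surj _ (f ∘ₗ e.symm.toLinearMap) (hf.comp e.symm.surjective)

theorem exists_annihilator_le_of_iInf [IsArtinian R R] {S : Type*}
    [AddCommGroup S] [Module R S] [IsSimpleModule R S] (W : ℕ → Type*)
    [∀ n, AddCommGroup (W n)] [∀ n, Module R (W n)]
    (h : ∀ a : R, (∀ n, ∀ t : W n, a • t = 0) → ∀ s : S, a • s = 0) :
    ∃ n, ∀ a : R, (∀ t : W n, a • t = 0) → ∀ s : S, a • s = 0 := by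
  by_contra! hc
  have key : ∀ n : ℕ, ∃ b : R, (∀ k < n, ∀ t : W k, b • t = 0) ∧ ∃ s : S, b • s ≠ 0 := by
    intro n
    induction n with
    | zero =>
      have := IsSimpleModule.nontrivial R S
      obtain ⟨s0, hs0⟩ := exists_ne (0 : S)
      exact ⟨1, by simp, s0, by simpa using hs0⟩
    | succ n ih =>
      obtain ⟨b, hb, s, hs⟩ := ih
      obtain ⟨d, hd, t, ht⟩ := hc n
      obtain ⟨c, rfl⟩ := simple_exists_smul (R := R) hs t
      refine ⟨d * (c * b), fun k hk t => ?_, s, by simpa [mul_smul] using ht⟩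
      rcases Nat.lt_succ_iff_lt_or_eq.1 hk with hk | rfl
      · rw [mul_smul, mul_smul, hb k hk, smul_zero, smul_zero]
      · rw [mul_smul, hd]
  let I : ℕ → Submodule R R := fun n => ⨅ k, ⨅ _ : k < n, Module.annihilator R (W k)
  have hI : ∀ m n, m ≤ n → I n ≤ I m := by
    intro m n hmn a ha
    simp only [I, Submodule.mem_iInf] at ha ⊢
    exact fun k hk => ha k (lt_of_lt_of_le hk hmn)
  obtain ⟨n, hn⟩ := IsArtinian.monotone_stabilizes (R := R) (M := R)
    ⟨fun n => OrderDual.toDual (I n), fun m n hmn => OrderDual.toDual_le_toDual.2 (hI m n hmn)⟩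
  obtain ⟨b, hb, s, hs⟩ := key n
  refine hs (h b (fun m t => ?_) s)
  have hb' : b ∈ I n := by
    simp only [I, Submodule.mem_iInf]
    exact fun k hk => Module.mem_annihilator.2 (hb k hk)
  have h1 : I n = I (max n (m + 1)) := hn (max n (m+1)) (le_max_left _ _)
  have h2 : I (max n (m + 1)) ≤ Module.annihilator R (W m) := by
    intro a ha
    simp only [I, Submodule.mem_iInf] at ha
    exact ha m (by omega)
  exact Module.mem_annihilator.1 (h2 (h1 ▸ hb')) t

end helpers

section pgroup

theorem exists_ne_zero_fixed_aux {p : ℕ} [Fact p.Prime] {P S : Type*} [Group P] [Finite P]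
    [AddCommGroup S] [DistribMulAction P S] [Nontrivial S] [Module (ZMod p) S]
    (hP : IsPGroup p P) : ∃ s : S, s ≠ 0 ∧ ∀ g : P, g • s = s := by
  obtain ⟨s0, hs0⟩ := exists_ne (0 : S)
  let B : Submodule (ZMod p) S := Submodule.span (ZMod p) (Set.range fun g : P => g • s0)
  have hs1 : s0 ∈ Set.range fun g : P => g • s0 := ⟨1, one_smul P s0⟩
  have hsB : s0 ∈ B := Submodule.mem_span_of_mem hs1
  have hB : ∀ (g : P) (s : S), s ∈ B → g • s ∈ B := by
    intro g s hs
    have : B ≤ B.comap ((DistribSMul.toAddMonoidHom S g).toZModLinearMap p) := by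
      refine Submodule.span_le.2 ?_
      rintro _ ⟨h, rfl⟩
      exact Submodule.subset_span (Set.mem_range.2 ⟨g * h, mul_smul _ _ _⟩)
    exact this hs
  have : Module.Finite (ZMod p) B :=
    Module.Finite.iff_fg.2 (Submodule.fg_span (Set.finite_range _))
  have : Finite B := Module.finite_of_finite (ZMod p)
  let : MulAction P B :=
    { smul := fun g b => ⟨g • b.1, hB g _ b.2⟩
      one_smul := fun b => Subtype.ext (one_smul P b.1)
      mul_smul := fun g h b => Subtype.ext (mul_smul g h b.1) }
  have : Nontrivial B := ⟨⟨⟨s0, hsB⟩, 0, fun h => hs0 (congrArg Subtype.val h)⟩⟩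
  have hd : p ∣ Nat.card B := by
    have := Fintype.ofFinite B
    rw [Nat.card_eq_fintype_card, Module.card_eq_pow_finrank (K := ZMod p), ZMod.card]
    exact dvd_pow_self _ (Module.finrank_pos (R := ZMod p) (M := B)).ne'
  obtain ⟨b, hb, hne⟩ := hP.exists_fixed_point_of_prime_dvd_card_of_fixed_point B hd (a := 0)
    (fun g => Subtype.ext (smul_zero g))
  exact ⟨b.1, fun h => hne (Subtype.ext h.symm), fun g => congrArg Subtype.val (hb g)⟩

theorem exists_ne_zero_fixed {p : ℕ} [Fact p.Prime] {P S : Type*} [Group P] [Finite P]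
    [AddCommGroup S] [DistribMulAction P S] [Nontrivial S] (hp : ∀ s : S, p • s = 0)
    (hP : IsPGroup p P) : ∃ s : S, s ≠ 0 ∧ ∀ g : P, g • s = s :=
  @exists_ne_zero_fixed_aux p _ P S _ _ _ _ _ (AddCommGroup.zmodModule hp) hP

theorem normal_pgroup_acts_trivially {F : Type*} [Field F] {p : ℕ} [Fact p.Prime] [CharP F p]
    {G : Type*} [Group G] [Finite G] (N : Subgroup G) [N.Normal] (hN : IsPGroup p N)
    {S : Type*} [AddCommGroup S] [Module (MonoidAlgebra F G) S]
    [IsSimpleModule (MonoidAlgebra F G) S] (n : G) (hn : n ∈ N) (s : S) :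
    (MonoidAlgebra.single n (1 : F)) • s = s := by
  let : DistribMulAction N S :=
    DistribMulAction.compHom S ((MonoidAlgebra.of F G).comp N.subtype)
  have hact : ∀ (n : N) (s : S), n • s = (MonoidAlgebra.single (n : G) (1 : F)) • s :=
    fun _ _ => rfl
  have := IsSimpleModule.nontrivial (MonoidAlgebra F G) S
  have hp : ∀ s : S, p • s = 0 := by
    intro s
    have h0 : (p : MonoidAlgebra F G) = 0 := by
      rw [← map_natCast (algebraMap F (MonoidAlgebra F G)), CharP.cast_eq_zero, map_zero]
    rw [← Nat.cast_smul_eq_nsmul (MonoidAlgebra F G), h0, zero_smul]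
  obtain ⟨s1, hs1, hfix⟩ := exists_ne_zero_fixed (P := N) hp hN
  obtain ⟨a, rfl⟩ := simple_exists_smul (R := MonoidAlgebra F G) hs1 s
  induction a using MonoidAlgebra.induction_linear with
  | zero => simp
  | add a b ha hb => rw [add_smul, smul_add, ha, hb]
  | single g r =>
    have h1 := hfix ⟨g⁻¹ * n * g, by
      simpa using (inferInstance : N.Normal).conj_mem n hn g⁻¹⟩
    rw [hact] at h1
    have h2 : MonoidAlgebra.single n (1 : F) * MonoidAlgebra.single g r =
        MonoidAlgebra.single g r * MonoidAlgebra.single (g⁻¹ * n * g) (1 : F) := by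
      simp [MonoidAlgebra.single_mul_single, mul_assoc]
    rw [← mul_smul, h2, mul_smul, h1]

theorem isPGroup_of_regular {p : ℕ} [Fact p.Prime] {G : Type*} [Group G] [Finite G]
    (N : Subgroup G) (h : ∀ g ∈ N, ¬ p ∣ orderOf g → g = 1) : IsPGroup p N := by
  rintro ⟨g, hg⟩
  obtain ⟨k, m, hm, hk⟩ := Nat.exists_eq_pow_mul_and_not_dvd (orderOf_pos g).ne' p
    (Fact.out : p.Prime).ne_one
  refine ⟨k, Subtype.ext (h _ (N.pow_mem hg _) ?_)⟩
  change ¬ p ∣ orderOf (g ^ p ^ k)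
  rw [orderOf_pow_of_dvd (pow_pos (Fact.out : p.Prime).pos k).ne' (hk ▸ Dvd.intro _ rfl), hk,
    Nat.mul_div_cancel_left _ (pow_pos (Fact.out : p.Prime).pos k)]
  exact hm

end pgroup

section main

variable {F G : Type} [Field F] [Group G] (V : Rep F G)

/-- Words in matrix coefficients, evaluated at a group element. -/
noncomputable def coeffHom (g : G) : FreeMonoid (Module.Dual F V × V) →* F :=
  FreeMonoid.lift fun x => x.1 (V.ρ g x.2)

theorem exists_tensor_coeff (w : FreeMonoid (Module.Dual F V × V)) :
    ∃ (n : ℕ) (v : repTensorPow F G V n) (φ : repTensorPow F G V n →ₗ[F] F),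
      ∀ g, φ ((repTensorPow F G V n).ρ g v) = coeffHom V g w := by
  induction w using FreeMonoid.inductionOn' with
  | one => exact ⟨0, (1 : F), (LinearMap.id : F →ₗ[F] F), fun g => by
      rw [map_one]; rfl⟩
  | of_mul x w ih =>
    obtain ⟨n, v, φ, h⟩ := ih
    refine ⟨n + 1, (v ⊗ₜ[F] x.2 : TensorProduct F (repTensorPow F G V n) V),
      (LinearMap.mul' F F ∘ₗ TensorProduct.map φ x.1 :
        TensorProduct F (repTensorPow F G V n) V →ₗ[F] F), fun g => ?_⟩
    have : φ ((repTensorPow F G V n).ρ g v) * x.1 (V.ρ g x.2) =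
       coeffHom V g (FreeMonoid.of x * w) := by
      rw [h, map_mul, mul_comm]; rfl
    exact this

theorem coeffHom_inj {g h : G} (hgh : coeffHom V g = coeffHom V h) : V.ρ g = V.ρ h := by
  ext v
  rw [← sub_eq_zero, ← Module.forall_dual_apply_eq_zero_iff F]
  intro φ
  have := DFunLike.congr_fun hgh (FreeMonoid.of (φ, v))
  simpa [coeffHom, sub_eq_zero] using this

theorem smul_eq_zero_of_forall_tensor [Fintype G] {S : Type*} [AddCommGroup S]
    [Module (MonoidAlgebra F G) S]
    (hS : ∀ g : G, (V.ρ g = 1) → ∀ s : S, (MonoidAlgebra.single g (1 : F)) • s = s)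
    (a : MonoidAlgebra F G)
    (ha : ∀ n, ∀ t : (repTensorPow F G V n).ρ.asModule, a • t = 0) (s : S) : a • s = 0 := by
  classical
  have hsum : ∀ w, (a.coeff.sum fun g r => r * coeffHom V g w) = 0 := by
    intro w
    obtain ⟨n, v, φ, h⟩ := exists_tensor_coeff V w
    have h1 := ha n ((repTensorPow F G V n).ρ.asModuleEquiv.symm v)
    have h2 : (repTensorPow F G V n).ρ.asAlgebraHom a v = 0 := h1
    have h3 := congrArg φ h2
    rw [Representation.asAlgebraHom_def, MonoidAlgebra.lift_apply, map_zero] at h3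
    rw [← h3]
    simp only [Finsupp.sum, LinearMap.sum_apply, map_sum, LinearMap.smul_apply, map_smul, h,
      smul_eq_mul]
  have hli := linearIndependent_monoidHom (FreeMonoid (Module.Dual F V × V)) F
  have hmap : Finsupp.mapDomain (coeffHom V) a.coeff = 0 := by
    refine (linearIndependent_iff.1 hli) _ ?_
    rw [Finsupp.linearCombination_mapDomain, Finsupp.linearCombination_apply]
    funext w
    refine Eq.trans ?_ (hsum w)
    simp [Finsupp.sum]
  have hex : ∃ f : (FreeMonoid (Module.Dual F V × V) →* F) → S,
      ∀ g, f (coeffHom V g) = (MonoidAlgebra.single g (1 : F)) • s := by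
    refine ⟨fun c => if h : ∃ g, coeffHom V g = c then
      (MonoidAlgebra.single h.choose (1 : F)) • s else 0, fun g => ?_⟩
    have h : ∃ g', coeffHom V g' = coeffHom V g := ⟨g, rfl⟩
    refine (dif_pos h).trans ?_
    have h1 := coeffHom_inj V h.choose_spec
    have h2 : V.ρ (g⁻¹ * h.choose) = 1 := by
      rw [map_mul, h1, ← map_mul, inv_mul_cancel, map_one]
    have h3 := congrArg (fun x => (MonoidAlgebra.single g (1 : F)) • x) (hS _ h2 s)
    simpa [← mul_smul, MonoidAlgebra.single_mul_single] using h3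
  obtain ⟨f, hf⟩ := hex
  have hdec : a = a.coeff.sum fun g r =>
      MonoidAlgebra.single (1 : G) r * MonoidAlgebra.single g (1 : F) := by
    simp [MonoidAlgebra.single_mul_single]
  have h0 : ((Finsupp.mapDomain (coeffHom V) a.coeff).sum fun c r =>
      (MonoidAlgebra.single (1 : G) r) • f c) = 0 := by
    rw [hmap, Finsupp.sum_zero_index]
  rw [Finsupp.sum_mapDomain_index (by simp) (by simp [add_smul])] at h0
  rw [hdec, ← h0]
  simp only [Finsupp.sum, Finset.sum_smul, mul_smul, hf]

theorem repTensorPow_finite [FiniteDimensional F V] (n : ℕ) :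
    FiniteDimensional F (repTensorPow F G V n) := by
  induction n with
  | zero => exact (inferInstance : FiniteDimensional F F)
  | succ n ih =>
    exact (inferInstance : FiniteDimensional F (TensorProduct F (repTensorPow F G V n) V))

theorem repTensorPow_trivial (g : G) (hg : V.ρ g = 1) (n : ℕ) :
    (repTensorPow F G V n).ρ g = 1 := by
  induction n with
  | zero => rfl
  | succ n ih =>
    have : TensorProduct.map ((repTensorPow F G V n).ρ g) (V.ρ g) = LinearMap.id := by
      rw [ih, hg]; exact TensorProduct.map_id
    exact this

theorem isArtinian_of_fd {A W : Type*} [Ring A] [Algebra F A] [AddCommGroup W] [Module F W]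
    [Module A W] [IsScalarTower F A W] [FiniteDimensional F W] : IsFiniteLength A W := by
  rw [isFiniteLength_iff_isNoetherian_isArtinian]
  exact ⟨isNoetherian_of_tower F inferInstance, isArtinian_of_tower F inferInstance⟩

end main

/-- Brauer's theorem, Theorem 7.3 of the paper. Over an
algebraically closed field `F` of prime characteristic `p`, a finite-dimensional
representation `V` of a finite group `G` is tensor-rich if and only if the only
`p`-regular element of `G` acting as the identity on `V` is the identity. -/
theorem stmt15 (F : Type) [Field F] [IsAlgClosed F] (p : ℕ) [Fact p.Prime] [CharP F p]
    (G : Type) [Group G] [Fintype G]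
    (V : Rep F G) [FiniteDimensional F V] :
    TensorRich F G V ↔
      ∀ g : G, ¬ p ∣ orderOf g → (∀ v : V, V.ρ g v = v) → g = 1 := by
  classical
  have hfin : Module.Finite F (MonoidAlgebra F G) :=
    Module.Finite.equiv (MonoidAlgebra.coeffLinearEquiv F).symm
  have hart : IsArtinianRing (MonoidAlgebra F G) := isArtinian_of_tower F inferInstance
  constructor
  · intro hrich g hg hgV
    have hgV' : V.ρ g = 1 := LinearMap.ext hgV
    have htriv : ∀ (S : Type) [AddCommGroup S] [Module (MonoidAlgebra F G) S]
        [IsSimpleModule (MonoidAlgebra F G) S] (s : S),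
        (MonoidAlgebra.of F G g - 1) • s = 0 := by
      intro S _ _ hS s
      obtain ⟨n, hn⟩ := hrich S hS
      obtain ⟨M, f, hf⟩ := hn.exists_surj
      obtain ⟨x, rfl⟩ := hf s
      rw [← map_smul]
      have : (MonoidAlgebra.of F G g - 1) • x = 0 := by
        apply Subtype.ext
        apply (repTensorPow F G V n).ρ.asModuleEquiv.injective
        rw [Submodule.coe_smul, Representation.asModuleEquiv_map_smul, map_sub, map_one,
          Representation.asAlgebraHom_of, repTensorPow_trivial V g hgV' n, sub_self]
        rfl
      rw [this, map_zero]
    have hmem : MonoidAlgebra.of F G g - 1 ∈ Ideal.jacobson (⊥ : Ideal (MonoidAlgebra F G)) := by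
      rw [Ideal.jacobson, Ideal.mem_sInf]
      rintro I ⟨-, hI⟩
      have : IsSimpleModule (MonoidAlgebra F G) (MonoidAlgebra F G ⧸ I) :=
        isSimpleModule_iff_isCoatom.2 hI.out
      have := htriv (MonoidAlgebra F G ⧸ I) (Submodule.Quotient.mk 1)
      rw [← Submodule.Quotient.mk_smul, Submodule.Quotient.mk_eq_zero] at this
      simpa using this
    obtain ⟨m, hm⟩ := IsArtinianRing.isNilpotent_jacobson_bot (R := MonoidAlgebra F G)
    have hpow : (MonoidAlgebra.of F G g - 1) ^ m = 0 := by
      have := Ideal.pow_mem_pow hmem m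
      rw [hm] at this
      simpa using this
    have hpow2 : (MonoidAlgebra.of F G g - 1) ^ p ^ m = 0 :=
      pow_eq_zero_of_le (Nat.lt_pow_self (Fact.out : p.Prime).one_lt).le hpow
    have : CharP (MonoidAlgebra F G) p :=
      charP_of_injective_algebraMap (algebraMap F (MonoidAlgebra F G)).injective p
    rw [sub_pow_char_pow_of_commute _ _ (Commute.one_right _), one_pow, sub_eq_zero,
      ← map_pow, ← map_one (MonoidAlgebra.of F G)] at hpow2
    have hg1 : g ^ p ^ m = 1 := MonoidAlgebra.of_injective hpow2
    have hd := orderOf_dvd_of_pow_eq_one hg1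
    obtain ⟨k, -, hk⟩ := (Nat.dvd_prime_pow (Fact.out : p.Prime)).1 hd
    rcases Nat.eq_zero_or_pos k with rfl | hk0
    · exact orderOf_eq_one_iff.1 (by simpa using hk)
    · exact absurd (hk ▸ dvd_pow_self p hk0.ne') hg
  · intro h S _ _ hS
    let N : Subgroup G := V.ρ.toHomUnits.ker
    have hNmem : ∀ g, g ∈ N ↔ V.ρ g = 1 := by
      intro g
      rw [MonoidHom.mem_ker, Units.ext_iff]
      rfl
    have hN : IsPGroup p N := isPGroup_of_regular N fun g hg hp =>
      h g hp fun v => by rw [(hNmem g).1 hg]; rfl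
    obtain ⟨n, hn⟩ := exists_annihilator_le_of_iInf (R := MonoidAlgebra F G) (S := S)
      (fun n => (repTensorPow F G V n).ρ.asModule)
      (smul_eq_zero_of_forall_tensor V fun g hg s =>
        normal_pgroup_acts_trivially N hN g ((hNmem g).2 hg) s)
    have := repTensorPow_finite V n
    exact ⟨n, isCompositionFactor_of_annihilator_le (isArtinian_of_fd (F := F)) hn⟩
end

section
/- Let F be an algebraically closed field, let G be a finite group, and let V be a finite-dimensional faithful representation of G over F (i.e., the group homomorphism G → GL(V) is injective). Then V is tensor-rich: every simple FG-module is a composition factor of some tensor power V^{⊗k}. -/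
open CategoryTheory MonoidalCategory

theorem compFactor_of_faithful {R : Type*} [Ring R] [IsArtinianRing R] {S : Type*} [AddCommGroup S] [Module R S] [IsSimpleModule R S]
    {ι : Type*} (W : ι → Type*) [∀ i, AddCommGroup (W i)] [∀ i, Module R (W i)]
    (h : ∀ a : R, a ≠ 0 → ∃ i, ∃ w : W i, a • w ≠ 0) : ∃ i, IsCompositionFactor R S (W i) := by
  have := IsSimpleModule.nontrivial R S
  obtain ⟨s, hs⟩ := exists_ne (0 : S)
  let f : R →ₗ[R] S := LinearMap.toSpanSingleton R S s
  have hf : ¬ (⊤ : Submodule R R) ≤ LinearMap.ker f := by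
    intro h; apply hs; simpa [f] using h (Submodule.mem_top (x := (1:R)))
  obtain ⟨I, hI, hmin⟩ := (wellFounded_lt (α := Submodule R R)).has_min {I | ¬ I ≤ LinearMap.ker f} ⟨⊤, hf⟩
  obtain ⟨a, haI, ha⟩ := Set.not_subset.1 hI
  have ha0 : a ≠ 0 := by rintro rfl; exact ha (Submodule.zero_mem _)
  obtain ⟨i, w, hw⟩ := h a ha0
  refine ⟨i, ?_⟩
  let φ : R →ₗ[R] W i := LinearMap.toSpanSingleton R (W i) w
  have hK : I ⊓ LinearMap.ker φ ≤ LinearMap.ker f := by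
    by_contra hc
    refine hmin _ hc (lt_of_le_of_ne inf_le_left fun he => hw ?_)
    have : a ∈ I ⊓ LinearMap.ker φ := by rw [he]; exact haI
    simpa [φ] using this.2
  let K := LinearMap.ker f
  refine ⟨(I ⊓ K).map φ, I.map φ, Submodule.map_mono inf_le_left, ?_⟩
  let q : I →ₗ[R] (I.map φ ⧸ Submodule.comap (I.map φ).subtype ((I ⊓ K).map φ)) :=
    (Submodule.mkQ _) ∘ₗ (φ.submoduleMap I)
  let fI : I →ₗ[R] S := f ∘ₗ I.subtype
  have hq : Function.Surjective q :=
    (Submodule.mkQ_surjective _).comp (LinearMap.submoduleMap_surjective φ I)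
  have hfI : Function.Surjective fI := by
    apply LinearMap.surjective_of_ne_zero
    intro h0
    exact ha (by simpa [fI] using LinearMap.congr_fun h0 ⟨a, haI⟩)
  have hker : LinearMap.ker q = LinearMap.ker fI := by
    ext ⟨x, hx⟩
    simp only [q, fI, LinearMap.mem_ker, LinearMap.comp_apply, Submodule.mkQ_apply, Submodule.Quotient.mk_eq_zero,
      Submodule.mem_comap, Submodule.subtype_apply]
    change φ x ∈ _ ↔ f x = 0
    constructor
    · rintro ⟨y, ⟨hyI, hyK⟩, hy⟩
      have : x - y ∈ I ⊓ LinearMap.ker φ := ⟨I.sub_mem hx hyI, by simp [hy]⟩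
      have h2 := hK this
      have h3 : f y = 0 := hyK
      simpa [LinearMap.mem_ker, h3] using h2
    · intro h0
      exact ⟨x, ⟨hx, h0⟩, rfl⟩
  exact ⟨(q.quotKerEquivOfSurjective hq).symm ≪≫ₗ Submodule.quotEquivOfEq _ _ hker ≪≫ₗ
    fI.quotKerEquivOfSurjective hfI⟩

theorem matcoef_vanish {F G : Type} [Field F] [Group G] [Fintype G] (V : Rep F G) (a : G → F)
    (H : ∀ (k : ℕ) (w : repTensorPow F G V k), ∑ g, a g • (repTensorPow F G V k).ρ g w = 0)
    (ξ : G → Module.Dual F V) (v : G → V) (t : G → F) (s : Finset G) :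
    ∀ (k : ℕ) (w : repTensorPow F G V k) (η : Module.Dual F (repTensorPow F G V k)),
      ∑ g, a g * η ((repTensorPow F G V k).ρ g w) * ∏ h ∈ s, (ξ h (V.ρ g (v h)) - t h) = 0 := by
  classical
  induction s using Finset.induction_on with
  | empty =>
    intro k w η
    simpa using congrArg η (H k w)
  | insert h s hs ih =>
    intro k w η
    have h1 := ih (k+1) (w ⊗ₜ[F] v h) (LinearMap.mul' F F ∘ₗ TensorProduct.map η (ξ h))
    have h2 := congrArg (fun x => t h * x) (ih k w η)
    have h1 : ∑ g, a g * (η ((repTensorPow F G V k).ρ g w) * ξ h (V.ρ g (v h))) *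
        ∏ h ∈ s, (ξ h (V.ρ g (v h)) - t h) = 0 := h1
    simp only [mul_zero, Finset.mul_sum] at h2
    rw [← sub_zero (0:F)]
    nth_rw 2 [← h2]
    rw [← h1, ← Finset.sum_sub_distrib]
    refine Finset.sum_congr rfl fun g _ => ?_
    rw [Finset.prod_insert hs]
    ring

/-- Corollary 7.4 of the paper. Over an algebraically closed
field `F`, every finite-dimensional faithful representation `V` of a finite
group `G` is tensor-rich. -/
theorem stmt16 (F : Type) [Field F] [IsAlgClosed F]
    (G : Type) [Group G] [Fintype G]
    (V : Rep F G) [FiniteDimensional F V]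
    (hfaithful : Function.Injective fun g : G => V.ρ g) :
    TensorRich F G V := by
  classical
  intro S _ _ hS
  have : IsArtinianRing (MonoidAlgebra F G) := by
    have : Module.Finite F (MonoidAlgebra F G) := inferInstance
    exact IsArtinianRing.of_finite F _
  apply compFactor_of_faithful (R := MonoidAlgebra F G) (S := S) (fun n => (repTensorPow F G V n).ρ.asModule)
  intro a ha
  by_contra! hc
  apply ha
  have H : ∀ (k : ℕ) (w : repTensorPow F G V k), ∑ g, a.coeff g • (repTensorPow F G V k).ρ g w = 0 := by
    intro k w
    have h1 := hc k ((repTensorPow F G V k).ρ.asModuleEquiv.symm w)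
    have h2 := congrArg (repTensorPow F G V k).ρ.asModuleEquiv h1
    rw [Representation.asModuleEquiv_map_smul] at h2
    simp [Representation.asAlgebraHom_def, MonoidAlgebra.lift_apply, Finsupp.sum_fintype] at h2
    simpa using h2
  have key : ∀ g0 h : G, ∃ (ξ : Module.Dual F V) (v : V), h ≠ g0 → ξ (V.ρ g0 v) ≠ ξ (V.ρ h v) := by
    intro g0 h
    by_cases e : h = g0
    · exact ⟨0, 0, fun h => absurd e h⟩
    have : V.ρ g0 ≠ V.ρ h := fun h' => e (hfaithful h'.symm)
    obtain ⟨v, hv⟩ := DFunLike.ne_iff.1 this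
    by_contra! hcon
    apply hv
    rw [← sub_eq_zero, ← Module.forall_dual_apply_eq_zero_iff F]
    intro ξ
    rw [map_sub, sub_eq_zero]
    exact (hcon ξ v).2
  ext g0
  choose ξ v hξ using key g0
  have h1 := matcoef_vanish V a.coeff H ξ v (fun h => ξ h (V.ρ h (v h))) (Finset.univ.erase g0) 0 (1 : F) LinearMap.id
  have h2 : ∀ g, (LinearMap.id : F →ₗ[F] F) ((repTensorPow F G V 0).ρ g (1:F)) = 1 := fun g => rfl
  rw [Finset.sum_eq_single g0] at h1
  · erw [h2] at h1
    rw [mul_one] at h1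
    refine (mul_eq_zero.1 h1).resolve_right (Finset.prod_ne_zero_iff.2 fun h hh => ?_)
    exact sub_ne_zero.2 (hξ h (Finset.ne_of_mem_erase hh))
  · intro g _ hg
    rw [Finset.prod_eq_zero (Finset.mem_erase.2 ⟨hg, Finset.mem_univ g⟩) (sub_self _), mul_zero]
  · simp
end

section
/- Let F be an algebraically closed field of prime characteristic p, let G be a finite group, and let ρ : G → GL(V) be a finite-dimensional representation of G over F. Let N be the subgroup of G generated by the p-regular elements of ker(ρ), i.e., by {g ∈ ker(ρ) : p does not divide the order of g}. Then: (1) N is a normal subgroup of G; and (2) since N ⊆ ker(ρ), the representation ρ factors through a representation \bar{ρ} : G/N → GL(V), and this representation \bar{ρ} of the quotient group G/N is tensor-rich. -/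
open CategoryTheory MonoidalCategory

theorem isCompositionFactor_of_ann {A : Type*} [Ring A] [IsArtinianRing A]
    {S : Type*} [AddCommGroup S] [Module A S] (hS : IsSimpleModule A S)
    {ι : Type*} (M : ι → Type*) [∀ i, AddCommGroup (M i)] [∀ i, Module A (M i)]
    (h : ∀ a : A, (∀ i (m : M i), a • m = 0) → ∀ s : S, a • s = 0) :
    ∃ i, IsCompositionFactor A S (M i) := by
  classical
  haveI := IsSimpleModule.nontrivial A S
  obtain ⟨s, hs⟩ := exists_ne (0 : S)
  let π : A →ₗ[A] S := LinearMap.toSpanSingleton A S s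
  obtain ⟨B, hB, hmin⟩ := WellFounded.has_min (wellFounded_lt (α := Submodule A A))
    {B | ¬ B ≤ LinearMap.ker π} ⟨⊤, fun hle => hs (by
      have := hle (x := (1 : A)) trivial
      simpa [π] using this)⟩
  obtain ⟨b, hbB, hb⟩ := Set.not_subset.mp hB
  have hbs : b • s ≠ 0 := by simpa [π] using hb
  have : ∃ i, ∃ m : M i, b • m ≠ 0 := by
    by_contra! hc
    exact hbs (h b hc s)
  obtain ⟨i, m, hm⟩ := this
  refine ⟨i, ?_⟩
  have hle : B ⊓ LinearMap.ker (LinearMap.toSpanSingleton A (M i) m) ≤ LinearMap.ker π := by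
    by_contra hc
    refine hmin _ hc (lt_of_le_of_ne inf_le_left fun heq => ?_)
    have : b ∈ B ⊓ LinearMap.ker (LinearMap.toSpanSingleton A (M i) m) := heq.symm.le hbB
    exact hm (by simpa using this.2)
  let f : B →ₗ[A] M i := (LinearMap.toSpanSingleton A (M i) m).comp B.subtype
  let π' : B →ₗ[A] S := π.comp B.subtype
  have hπ' : Function.Surjective π' := by
    apply LinearMap.surjective_of_ne_zero
    intro h0
    exact hbs (by simpa [π', π] using LinearMap.congr_fun h0 ⟨b, hbB⟩)
  have hker : LinearMap.ker f ≤ LinearMap.ker π' := by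
    intro x hx
    exact hle ⟨x.2, hx⟩
  let g : LinearMap.range f →ₗ[A] S :=
    ((LinearMap.ker f).liftQ π' hker).comp f.quotKerEquivRange.symm.toLinearMap
  have hg : Function.Surjective g := by
    intro y
    obtain ⟨x, rfl⟩ := hπ' y
    exact ⟨f.quotKerEquivRange (Submodule.Quotient.mk x), by simp [g]⟩
  refine ⟨(LinearMap.ker g).map (LinearMap.range f).subtype, LinearMap.range f,
    Submodule.map_subtype_le _ _, ⟨?_⟩⟩
  rw [Submodule.comap_map_eq_of_injective (Submodule.injective_subtype _)]
  exact g.quotKerEquivOfSurjective hg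

theorem pgroup_acts_trivially (F : Type) [Field F] (p : ℕ) [Fact p.Prime] [CharP F p]
    (Q : Type) [Group Q] [Finite Q] (K : Subgroup Q) [K.Normal] (hK : IsPGroup p K)
    (S : Type) [AddCommGroup S] [Module (MonoidAlgebra F Q) S]
    (hS : IsSimpleModule (MonoidAlgebra F Q) S) (k : Q) (hk : k ∈ K) (s : S) :
    MonoidAlgebra.of F Q k • s = s := by
  let T : Submodule (MonoidAlgebra F Q) S :=
    { carrier := {s | ∀ k ∈ K, MonoidAlgebra.of F Q k • s = s}
      add_mem' := fun ha hb k hk => by rw [smul_add, ha k hk, hb k hk]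
      zero_mem' := fun k _ => smul_zero _
      smul_mem' := fun c x hx k hk => by
        induction c using MonoidAlgebra.induction_linear with
        | zero => simp
        | add a b ha hb => rw [add_smul, smul_add, ha, hb]
        | single g r =>
          have h1 : MonoidAlgebra.of F Q k * MonoidAlgebra.single g r
              = MonoidAlgebra.single g r * MonoidAlgebra.of F Q (g⁻¹ * k * g) := by
            simp [MonoidAlgebra.of_apply, MonoidAlgebra.single_mul_single, mul_assoc]
          rw [← mul_smul, h1, mul_smul, hx]
          simpa using (inferInstance : K.Normal).conj_mem k hk g⁻¹ }
  have hchar : ∀ x : S, p • x = 0 := fun x => by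
    have h1 : ((p : MonoidAlgebra F Q)) = 0 := by
      rw [← map_natCast (algebraMap F (MonoidAlgebra F Q)), CharP.cast_eq_zero, map_zero]
    rw [← Nat.cast_smul_eq_nsmul (MonoidAlgebra F Q), h1, zero_smul]
  have hT : T ≠ ⊥ := by
    haveI := IsSimpleModule.nontrivial (MonoidAlgebra F Q) S
    obtain ⟨s, hs⟩ := exists_ne (0 : S)
    let O : Set S := Set.range fun g : K => MonoidAlgebra.of F Q (g : Q) • s
    let E : AddSubgroup S := AddSubgroup.closure O
    have hE : ∀ (g : K) (x : S), x ∈ E → MonoidAlgebra.of F Q (g : Q) • x ∈ E := by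
      intro g x hx
      induction hx using AddSubgroup.closure_induction with
      | mem x hx =>
        obtain ⟨h, rfl⟩ := hx
        exact AddSubgroup.subset_closure ⟨g * h, by simp [← mul_smul]⟩
      | zero => simp
      | add x y _ _ hx hy => rw [smul_add]; exact add_mem hx hy
      | neg x _ hx => rw [smul_neg]; exact neg_mem hx
    letI : MulAction K E :=
      { smul := fun g x => ⟨MonoidAlgebra.of F Q (g : Q) • (x : S), hE g x x.2⟩
        one_smul := fun x => Subtype.ext (by
          change MonoidAlgebra.of F Q ((1 : K) : Q) • (x : S) = x
          simp [← MonoidAlgebra.one_def])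
        mul_smul := fun g h x => Subtype.ext (by
          change MonoidAlgebra.of F Q ((g * h : K) : Q) • (x : S) =
            MonoidAlgebra.of F Q (g : Q) • MonoidAlgebra.of F Q (h : Q) • (x : S)
          rw [← mul_smul, ← map_mul]; rfl) }
    have hpE : ∀ x : E, p • x = 0 := fun x => Subtype.ext (by simpa using hchar x)
    haveI : AddGroup.FG E := by
      rw [AddGroup.fg_iff_addSubgroup_fg]
      exact (AddSubgroup.fg_iff _).2 ⟨O, rfl, Set.finite_range _⟩
    haveI : Finite E := by
      refine AddCommGroup.finite_of_fg_isAddTorsion E (fun x => ?_)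
      exact isOfFinAddOrder_iff_nsmul_eq_zero.2 ⟨p, (Fact.out : p.Prime).pos, hpE x⟩
    have hsE : s ∈ E := AddSubgroup.subset_closure ⟨1, by simp [← MonoidAlgebra.one_def]⟩
    have hdvd : p ∣ Nat.card E := by
      have h1 : addOrderOf (⟨s, hsE⟩ : E) = p :=
        addOrderOf_eq_prime (hpE _) (fun h => hs (by simpa using congrArg Subtype.val h))
      rw [← h1]
      exact addOrderOf_dvd_natCard _
    obtain ⟨b, hb, hne⟩ := hK.exists_fixed_point_of_prime_dvd_card_of_fixed_point E hdvd
      (a := 0) (fun g => Subtype.ext (smul_zero (MonoidAlgebra.of F Q (g : Q))))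
    intro hbot
    have : (b : S) ∈ T := fun k hk => congrArg Subtype.val (hb ⟨k, hk⟩)
    rw [hbot] at this
    exact hne (Subtype.ext (by simpa using this.symm))
  have : T = ⊤ := (eq_bot_or_eq_top T).resolve_left hT
  have hs : s ∈ T := this ▸ trivial
  exact hs k hk

open TensorProduct in
theorem coeff_mem (F : Type) [Field F] (Q : Type) [Group Q] (X : Rep F Q) (f : Q → F)
    (hf : f ∈ Submonoid.closure {f : Q → F | ∃ (v : X) (l : Module.Dual F X),
      f = fun g => l (X.ρ g v)}) :
    ∃ (n : ℕ) (v : repTensorPow F Q X n) (l : Module.Dual F (repTensorPow F Q X n)),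
      f = fun g => l ((repTensorPow F Q X n).ρ g v) := by
  induction hf using Submonoid.closure_induction_right with
  | one => exact ⟨0, (1 : F), (LinearMap.id : F →ₗ[F] F), rfl⟩
  | mul_right x _ y hy ih =>
    obtain ⟨n, v, l, rfl⟩ := ih
    obtain ⟨w, m, rfl⟩ := hy
    let l' : (repTensorPow F Q X n) ⊗[F] X →ₗ[F] F :=
      (TensorProduct.lid F F).toLinearMap.comp (TensorProduct.map l m)
    refine ⟨n + 1, (v ⊗ₜ[F] w : (repTensorPow F Q X n) ⊗[F] X), l', ?_⟩
    funext g
    change l _ * m _ = l' (((repTensorPow F Q X n).ρ.tprod X.ρ) g (v ⊗ₜ[F] w))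
    simp [l']

theorem ann_le (F : Type) [Field F] (Q : Type) [Group Q] [Fintype Q] (X : Rep F Q)
    (S : Type) [AddCommGroup S] [Module (MonoidAlgebra F Q) S]
    (hS : ∀ k, X.ρ k = 1 → ∀ s : S, MonoidAlgebra.of F Q k • s = s)
    (a : MonoidAlgebra F Q)
    (ha : ∀ n (m : (repTensorPow F Q X n).ρ.asModule), a • m = 0) (s : S) : a • s = 0 := by
  classical
  have hsum : a = ∑ g, MonoidAlgebra.single g (a.coeff g) := by
    ext g
    simp [MonoidAlgebra.coeff_sum, Finsupp.single_apply]
  let C : Set (Q → F) := {f : Q → F | ∃ (v : X) (l : Module.Dual F X), f = fun g => l (X.ρ g v)}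
  -- every function in the algebra generated by coefficients pairs to zero with `a`
  have h1 : ∀ f ∈ Algebra.adjoin F C, ∑ g, a.coeff g * f g = 0 := by
    intro f hf
    rw [← Subalgebra.mem_toSubmodule, Algebra.adjoin_eq_span] at hf
    induction hf using Submodule.span_induction with
    | mem f hf =>
      obtain ⟨n, v, l, rfl⟩ := coeff_mem F Q X f hf
      have h2 := ha n v
      have h3 : (repTensorPow F Q X n).ρ.asAlgebraHom a v = 0 := h2
      have h4 := congrArg l h3
      rw [hsum] at h4
      simpa only [map_sum, Representation.asAlgebraHom_single, LinearMap.sum_apply,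
        LinearMap.smul_apply, map_smul, smul_eq_mul, map_zero] using h4
    | zero => simp
    | add x y _ _ hx hy => simp [mul_add, Finset.sum_add_distrib, hx, hy]
    | smul c x _ hx =>
      have : ∀ g, a.coeff g * (c • x) g = c * (a.coeff g * x g) := fun g => by
        simp; ring
      simp only [this, ← Finset.mul_sum, hx, mul_zero]
  -- indicator functions of fibres
  have hsep : ∀ q₀ q : Q, X.ρ q ≠ X.ρ q₀ → ∃ f ∈ Algebra.adjoin F C,
      (∀ g, X.ρ g = X.ρ q₀ → f g = 1) ∧ (∀ g, X.ρ g = X.ρ q → f g = 0) := by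
    intro q₀ q hne
    obtain ⟨v, hv⟩ : ∃ v, X.ρ q v ≠ X.ρ q₀ v := by
      by_contra! hc
      exact hne (LinearMap.ext hc)
    obtain ⟨l, hl⟩ : ∃ l : Module.Dual F X, l (X.ρ q₀ v - X.ρ q v) ≠ 0 := by
      by_contra! hc
      exact hv (sub_eq_zero.1 ((Module.forall_dual_apply_eq_zero_iff F _).1 hc)).symm
    refine ⟨(l (X.ρ q₀ v - X.ρ q v))⁻¹ • ((fun g => l (X.ρ g v)) -
      algebraMap F (Q → F) (l (X.ρ q v))), ?_, ?_, ?_⟩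
    · have hC : (fun g => l (X.ρ g v)) ∈ C := ⟨v, l, rfl⟩
      exact Subalgebra.smul_mem _ (sub_mem (Algebra.subset_adjoin hC)
        (Subalgebra.algebraMap_mem _ _)) _
    · intro g hg
      simp only [Pi.smul_apply, Pi.sub_apply, Pi.algebraMap_apply, hg, smul_eq_mul,
        Algebra.algebraMap_self, RingHom.id_apply]
      rw [← map_sub]
      exact inv_mul_cancel₀ hl
    · intro g hg
      simp [hg]
  have hind : ∀ q₀ : Q, ∑ g with X.ρ g = X.ρ q₀, a.coeff g = 0 := by
    intro q₀
    choose! f hf using hsep q₀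
    have hmem : (∏ q with X.ρ q ≠ X.ρ q₀, f q) ∈ Algebra.adjoin F C :=
      prod_mem fun q hq => (hf q (by simpa using hq)).1
    rw [← h1 _ hmem, Finset.sum_filter]
    refine Finset.sum_congr rfl fun g _ => ?_
    rw [Finset.prod_apply]
    split_ifs with hg
    · rw [Finset.prod_eq_one, mul_one]
      intro q hq
      exact (hf q (by simpa using hq)).2.1 g hg
    · rw [Finset.prod_eq_zero (i := g), mul_zero]
      · simpa using hg
      · exact (hf g hg).2.2 g rfl
  have hconst : ∀ g h : Q, X.ρ g = X.ρ h →
      MonoidAlgebra.of F Q g • s = MonoidAlgebra.of F Q h • s := by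
    intro g h hgh
    have h1 : X.ρ (h⁻¹ * g) = 1 := by
      rw [map_mul, hgh, ← map_mul, inv_mul_cancel, map_one]
    have h2 := hS _ h1 s
    conv_rhs => rw [← h2]
    rw [← mul_smul, ← map_mul, mul_inv_cancel_left]
  rw [hsum, Finset.sum_smul,
    ← Finset.sum_fiberwise_of_maps_to (s := Finset.univ) (t := Finset.univ.image X.ρ)
      (g := X.ρ) (fun g _ => Finset.mem_image_of_mem _ (Finset.mem_univ g))]
  refine Finset.sum_eq_zero fun x hx => ?_
  obtain ⟨q₀, -, rfl⟩ := Finset.mem_image.1 hx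
  have h5 : ∀ g ∈ Finset.univ.filter (fun g => X.ρ g = X.ρ q₀),
      MonoidAlgebra.single g (a.coeff g) • s
        = algebraMap F (MonoidAlgebra F Q) (a.coeff g) • (MonoidAlgebra.of F Q q₀ • s) := by
    intro g hg
    rw [← hconst g q₀ (by simpa using hg), ← mul_smul]
    simp
  rw [Finset.sum_congr rfl h5, ← Finset.sum_smul, ← map_sum, hind q₀, map_zero, zero_smul]

/-- Proposition 7.5 of the paper. Let `ρ : G → GL(W)` be a
finite-dimensional representation over an algebraically closed field `F` of
prime characteristic `p`, and let `N` be the subgroup of `G` generated by the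
`p`-regular elements of `ker ρ`. Then `N` is normal in `G`, and `ρ` factors
through a representation `ρ̄` of `G/N` which is tensor-rich. -/
theorem stmt17 (F : Type) [Field F] [IsAlgClosed F] (p : ℕ) [Fact p.Prime] [CharP F p]
    (G : Type) [Group G] [Fintype G]
    (W : Type) [AddCommGroup W] [Module F W] [FiniteDimensional F W]
    (ρ : Representation F G W)
    (N : Subgroup G)
    (hN : N = Subgroup.closure {g : G | ρ g = 1 ∧ ¬ p ∣ orderOf g}) :
    ∃ hnorm : N.Normal,
      letI := hnorm
      (∃ ρbar : Representation F (G ⧸ N) W, ∀ g : G, ρbar (g : G ⧸ N) = ρ g) ∧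
        ∀ ρbar : Representation F (G ⧸ N) W,
          (∀ g : G, ρbar (g : G ⧸ N) = ρ g) →
            TensorRich F (G ⧸ N) (Rep.of ρbar) := by
  have hNker : ∀ g ∈ N, ρ g = 1 := by
    intro g hg
    rw [hN] at hg
    have : Subgroup.closure {g : G | ρ g = 1 ∧ ¬ p ∣ orderOf g} ≤ MonoidHom.ker ρ :=
      (Subgroup.closure_le _).2 fun g hg => hg.1
    exact this hg
  have hnorm : N.Normal := by
    have hc : ∀ h : G, N ≤ N.comap (MulAut.conj h).toMonoidHom := by
      intro h
      conv_lhs => rw [hN]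
      rw [Subgroup.closure_le]
      rintro g ⟨h1, h2⟩
      change h * g * h⁻¹ ∈ N
      rw [hN]
      refine Subgroup.subset_closure ⟨?_, ?_⟩
      · rw [map_mul, map_mul, h1, mul_one, ← map_mul, mul_inv_cancel, map_one]
      · have : orderOf (h * g * h⁻¹) = orderOf g :=
          orderOf_injective (MulAut.conj h).toMonoidHom (MulAut.conj h).injective g
        rwa [this]
    exact ⟨fun g hg h => hc h hg⟩
  refine ⟨hnorm, ⟨QuotientGroup.lift N ρ hNker, fun g => rfl⟩, ?_⟩
  intro ρbar hρ S _ _ hS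
  classical
  letI : Fintype (G ⧸ N) := Fintype.ofFinite _
  have hK : IsPGroup p (MonoidHom.ker ρbar) := by
    rintro ⟨x, hx⟩
    obtain ⟨g, rfl⟩ := QuotientGroup.mk_surjective x
    have hg : ρ g = 1 := by rw [← hρ]; exact hx
    obtain ⟨k, m, hm, hkm⟩ := Nat.exists_eq_pow_mul_and_not_dvd (orderOf_pos g).ne' p
      (Fact.out : p.Prime).ne_one
    refine ⟨k, Subtype.ext ?_⟩
    change ((g ^ p ^ k : G) : G ⧸ N) = 1
    rw [QuotientGroup.eq_one_iff, hN]
    refine Subgroup.subset_closure ⟨by rw [map_pow, hg, one_pow], ?_⟩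
    rw [orderOf_pow_of_dvd (pow_pos (Fact.out : p.Prime).pos k).ne' ⟨m, hkm⟩, hkm,
      Nat.mul_div_cancel_left _ (pow_pos (Fact.out : p.Prime).pos k)]
    exact hm
  haveI : Module.Finite F (MonoidAlgebra F (G ⧸ N)) := inferInstance
  haveI : IsArtinianRing (MonoidAlgebra F (G ⧸ N)) := IsArtinianRing.of_finite F _
  exact isCompositionFactor_of_ann hS
    (fun n => (repTensorPow F (G ⧸ N) (Rep.of ρbar) n).ρ.asModule)
    (fun a ha s => ann_le F (G ⧸ N) (Rep.of ρbar) S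
      (fun k hk s => pgroup_acts_trivially F p (G ⧸ N) (MonoidHom.ker ρbar) hK S hS k hk s) a ha s)
end
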